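/- Let Λ be a finite-dimensional algebra over an algebraically closed field K presented by a quiver whose underlying graph is a tree, with radical square zero. If Λ is τ-tilting-finite, then Λ is representation-finite. -/

import Mathlib

/- Formalization of statements from
   "Report on the finiteness of silting objects"
   by T. Aihara, T. Honma, K. Miyamoto, Q. Wang. -/

open CategoryTheory CategoryTheory.Limits

universe u v w

noncomputable section
namespace PaperSilting
/-! ### Module-theoretic notions.

We model right `Λ`-modules as left modules over the opposite ring; all the
definitions below are stated for left modules over a ring `R` and are applied
with `R := Λᵐᵒᵖ`. -/

/-- The category of `R`-modules (in `Type 0`). -/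
abbrev ModCat (R : Type) [Ring R] := ModuleCat.{0} R

variable {R : Type} [Ring R]

/-- The module object `M` is finitely generated. -/
def IsFGMod {R : Type} [Ring R] (M : ModCat R) : Prop := Module.Finite R M

/-- Indecomposable module object. -/
def IsIndecMod {R : Type} [Ring R] (M : ModCat R) : Prop :=
  ¬ IsZero M ∧ ∀ A B : ModCat R, Nonempty (M ≅ A ⊞ B) → IsZero A ∨ IsZero B

/-- `N` belongs to `add M`, i.e. `N` is a direct summand of a finite direct sum
of copies of `M`. -/
def MemAddMod {R : Type} [Ring R] (N M : ModCat R) : Prop :=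
  ∃ (k : ℕ) (g : N ⟶ ⨁ (fun _ : Fin k => M)) (h : (⨁ (fun _ : Fin k => M)) ⟶ N),
    g ≫ h = 𝟙 N

/-- A basic module: it has no direct summand of the form `N ⊕ N` with `N ≠ 0`. -/
def IsBasicMod {R : Type} [Ring R] (M : ModCat R) : Prop :=
  ∀ N X : ModCat R, Nonempty (M ≅ (N ⊞ N) ⊞ X) → IsZero N

/-- `M` is τ-rigid, i.e. `Hom(M, τM) = 0`: there is a projective presentation
`P₁ → P₀ → M → 0` by finitely generated projectives such that
`Hom(P₀, M) → Hom(P₁, M)` is surjective (Adachi–Iyama–Reiten). -/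
def IsTauRigidMod {R : Type} [Ring R] (M : ModCat R) : Prop :=
  ∃ (P₁ P₀ : ModCat R) (f : P₁ ⟶ P₀) (g : P₀ ⟶ M),
    Projective P₁ ∧ Projective P₀ ∧ IsFGMod P₁ ∧ IsFGMod P₀ ∧
    Function.Surjective g ∧ Function.Exact f g ∧
    ∀ h : P₁ ⟶ M, ∃ k : P₀ ⟶ M, f ≫ k = h

/-- A τ-rigid pair `(M, P)`: `M` is a τ-rigid module and `P` is a finitely
generated projective with `Hom(P, M) = 0`. -/
def IsTauRigidPairMod {R : Type} [Ring R] (M P : ModCat R) : Prop :=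
  IsFGMod M ∧ IsTauRigidMod M ∧ IsFGMod P ∧ Projective P ∧ ∀ f : P ⟶ M, f = 0

/-- `M` is a support τ-tilting module: `(M, P)` is a maximal τ-rigid pair for
some projective `P` (Adachi–Iyama–Reiten; equivalently, `M` is the `0`-th
cohomology of a two-term silting complex in `K^b(proj)`). -/
def IsSupportTauTiltingMod {R : Type} [Ring R] (M : ModCat R) : Prop :=
  ∃ P : ModCat R, IsTauRigidPairMod M P ∧
    ∀ N Q : ModCat R, IsTauRigidPairMod (M ⊞ N) (P ⊞ Q) → MemAddMod N M ∧ MemAddMod Q P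

/-- The ring `R` admits only finitely many basic support τ-tilting modules up
to isomorphism. -/
def IsTauTiltingFiniteRing (R : Type) [Ring R] : Prop :=
  ∃ (n : ℕ) (f : Fin n → ModCat R),
    ∀ M : ModCat R, IsSupportTauTiltingMod M → IsBasicMod M → ∃ i, Nonempty (M ≅ f i)

/-- The ring `R` admits only finitely many finitely generated indecomposable
modules up to isomorphism. -/
def IsRepFiniteRing (R : Type) [Ring R] : Prop :=
  ∃ (n : ℕ) (f : Fin n → ModCat R),
    ∀ M : ModCat R, IsFGMod M → IsIndecMod M → ∃ i, Nonempty (M ≅ f i)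

/-- `R` has exactly `n` isomorphism classes of basic support τ-tilting modules. -/
def SupportTauTiltingCount (R : Type) [Ring R] (n : ℕ) : Prop :=
  ∃ f : Fin n → ModCat R,
    (∀ i, IsSupportTauTiltingMod (f i) ∧ IsBasicMod (f i)) ∧
    (∀ i j, Nonempty (f i ≅ f j) → i = j) ∧
    (∀ M : ModCat R, IsSupportTauTiltingMod M → IsBasicMod M → ∃ i, Nonempty (M ≅ f i))

/-- An algebra `Λ` is τ-tilting-finite (with respect to right modules,
i.e. left `Λᵐᵒᵖ`-modules). -/
def IsTauTiltingFinite (Λ : Type) [Ring Λ] : Prop := IsTauTiltingFiniteRing Λᵐᵒᵖ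

/-- An algebra `Λ` is representation-finite (with respect to right modules). -/
def IsRepFinite (Λ : Type) [Ring Λ] : Prop := IsRepFiniteRing Λᵐᵒᵖ
/-! ### Radical, idempotents and the (Gabriel) quiver of an algebra. -/

/-- `x` lies in the Jacobson radical (left quasi-regular characterization). -/
def InRad (Λ : Type) [Ring Λ] (x : Λ) : Prop := ∀ y : Λ, IsUnit (1 - y * x)

/-- `x` lies in the square of the Jacobson radical. -/
def InRadSq (Λ : Type) [Ring Λ] (x : Λ) : Prop :=
  x ∈ AddSubgroup.closure {z : Λ | ∃ a b : Λ, InRad Λ a ∧ InRad Λ b ∧ z = a * b}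

/-- The Jacobson radical squares to zero. -/
def RadSqZero (Λ : Type) [Ring Λ] : Prop :=
  ∀ x y : Λ, InRad Λ x → InRad Λ y → x * y = 0

/-- A primitive idempotent. -/
def IsPrimitiveIdem (Λ : Type) [Ring Λ] (f : Λ) : Prop :=
  IsIdempotentElem f ∧ f ≠ 0 ∧
  ∀ a b : Λ, IsIdempotentElem a → IsIdempotentElem b →
    a * b = 0 → b * a = 0 → a + b = f → a = 0 ∨ b = 0

/-- A complete family of pairwise orthogonal primitive idempotents. -/
def IsCompletePrimitiveFamily (Λ : Type) [Ring Λ] {n : ℕ} (e : Fin n → Λ) : Prop :=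
  (∀ i, IsPrimitiveIdem Λ (e i)) ∧ (∀ i j, i ≠ j → e i * e j = 0) ∧ (∑ i, e i) = 1

/-- There is an arrow `i → j` in the Gabriel quiver of `Λ`
(i.e. `e i · (rad Λ / rad² Λ) · e j ≠ 0`). -/
def HasArrow (Λ : Type) [Ring Λ] {n : ℕ} (e : Fin n → Λ) (i j : Fin n) : Prop :=
  ∃ x : Λ, InRad Λ x ∧ ¬ InRadSq Λ (e i * x * e j)

/-- The underlying graph of the Gabriel quiver of `Λ`. -/
def QuiverGraph (Λ : Type) [Ring Λ] {n : ℕ} (e : Fin n → Λ) : SimpleGraph (Fin n) :=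
  SimpleGraph.fromRel (fun i j => HasArrow Λ e i j)

/-- Between any two vertices there is (up to scalars) at most a one-dimensional
space of arrows, i.e. `dim_K (e i · (rad/rad²) · e j) ≤ 1`. -/
def ArrowMultLE1 (Λ : Type) [Ring Λ] (K : Type) [Field K] [Algebra K Λ] {n : ℕ}
    (e : Fin n → Λ) : Prop :=
  ∀ (i j : Fin n) (x y : Λ), InRad Λ x → InRad Λ y →
    ∃ a b : K, (a ≠ 0 ∨ b ≠ 0) ∧ InRadSq Λ (a • (e i * x * e j) + b • (e i * y * e j))

/-- `Λ` is presented by a quiver whose underlying graph is a tree. -/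
def IsTreeQuiverAlgebra (Λ : Type) [Ring Λ] (K : Type) [Field K] [Algebra K Λ] : Prop :=
  ∃ (n : ℕ) (e : Fin n → Λ), IsCompletePrimitiveFamily Λ e ∧
    (∀ i, ¬ HasArrow Λ e i i) ∧
    (∀ i j, ¬ (HasArrow Λ e i j ∧ HasArrow Λ e j i)) ∧
    ArrowMultLE1 Λ K e ∧
    (QuiverGraph Λ e).IsTree


set_option linter.unusedSectionVars false

/-! ### Representations of a bipartite quiver and Bernstein–Gelfand–Ponomarev reflections. -/

/-- The opposite relation. -/
abbrev fl {I : Type} (E : I → I → Prop) : I → I → Prop := fun b a => E a b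

/-- Representation of the bipartite quiver with sources `I`, sinks `I` and an arrow for `E a b`. -/
structure QRep (K : Type) [Field K] {I : Type} (E : I → I → Prop) where
  X : I → Type
  Y : I → Type
  xg : ∀ a, AddCommGroup (X a)
  yg : ∀ a, AddCommGroup (Y a)
  xm : ∀ a, Module K (X a)
  ym : ∀ a, Module K (Y a)
  xf : ∀ a, FiniteDimensional K (X a)
  yf : ∀ a, FiniteDimensional K (Y a)
  φ : ∀ a b, E a b → X a →ₗ[K] Y b

attribute [instance] QRep.xg QRep.yg QRep.xm QRep.ym QRep.xf QRep.yf

/-- Morphisms of representations. -/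
structure QHom {K : Type} [Field K] {I : Type} {E : I → I → Prop} (U V : QRep K E) where
  x : ∀ a, U.X a →ₗ[K] V.X a
  y : ∀ b, U.Y b →ₗ[K] V.Y b
  comm : ∀ a b (h : E a b) u, y b (U.φ a b h u) = V.φ a b h (x a u)

section BGP
open Classical
variable {K : Type} [Field K] {I : Type} [Fintype I] {E : I → I → Prop}

def QHom.id (U : QRep K E) : QHom U U := ⟨fun _ => LinearMap.id, fun _ => LinearMap.id,
  fun _ _ _ _ => rfl⟩

def QHom.comp {U V W : QRep K E} (g : QHom V W) (f : QHom U V) : QHom U W :=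
  ⟨fun a => (g.x a).comp (f.x a), fun a => (g.y a).comp (f.y a), fun a b h u => by
    simp [f.comm, g.comm]⟩

theorem QHom.ext' {U V : QRep K E} {f g : QHom U V} (hx : ∀ a u, f.x a u = g.x a u)
    (hy : ∀ a u, f.y a u = g.y a u) : f = g := by
  cases f; cases g
  congr
  · funext a; ext u; exact hx a u
  · funext a; ext u; exact hy a u

/-- Isomorphism of representations. -/
def QIso (U V : QRep K E) : Prop :=
  ∃ (f : QHom U V) (g : QHom V U), g.comp f = QHom.id U ∧ f.comp g = QHom.id V

theorem QIso.trans {U V W : QRep K E} (h : QIso U V) (k : QIso V W) : QIso U W := by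
  obtain ⟨f, g, h1, h2⟩ := h
  obtain ⟨f', g', h3, h4⟩ := k
  refine ⟨f'.comp f, g.comp g', ?_, ?_⟩
  · have : (g.comp g').comp (f'.comp f) = g.comp ((g'.comp f').comp f) := rfl
    rw [this, h3]; exact h1
  · have : (f'.comp f).comp (g.comp g') = f'.comp ((f.comp g).comp g') := rfl
    rw [this, h2]; exact h4

theorem QIso.symm {U V : QRep K E} (h : QIso U V) : QIso V U := by
  obtain ⟨f, g, h1, h2⟩ := h
  exact ⟨g, f, h2, h1⟩

def QIsZero (U : QRep K E) : Prop := (∀ a, Subsingleton (U.X a)) ∧ ∀ a, Subsingleton (U.Y a)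

def QHom.IsZ {U V : QRep K E} (f : QHom U V) : Prop := (∀ a u, f.x a u = 0) ∧ ∀ a u, f.y a u = 0

/-- The map from the source `a` to all its targets. -/
def QRep.inj (U : QRep K E) (a : I) : U.X a →ₗ[K] (∀ b : {b // E a b}, U.Y b) :=
  LinearMap.pi fun b => U.φ a b b.2

/-- The map from all sources to the sink `b`. -/
def QRep.sum (U : QRep K E) (b : I) : (∀ a : {a // E a b}, U.X a) →ₗ[K] U.Y b :=
  LinearMap.lsum K (fun a : {a // E a b} => U.X a) K fun a => U.φ a b a.2

theorem QRep.inj_apply (U : QRep K E) (a : I) (u : U.X a) (b : {b // E a b}) :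
    U.inj a u b = U.φ a b b.2 u := rfl

theorem QRep.sum_apply (U : QRep K E) (b : I) (x : ∀ a : {a // E a b}, U.X a) :
    U.sum b x = ∑ a : {a // E a b}, U.φ a b a.2 (x a) := by
  simp [QRep.sum]

def QRep.Inj (U : QRep K E) : Prop := ∀ a, Function.Injective (U.inj a)

/-- The reflection functor given by cokernels. -/
abbrev Cok (U : QRep K E) : QRep K (fl E) where
  X := U.Y
  Y a := (∀ b : {b // E a b}, U.Y b) ⧸ LinearMap.range (U.inj a)
  xg := inferInstance
  yg := inferInstance
  xm := inferInstance
  ym := inferInstance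
  xf := inferInstance
  yf := inferInstance
  φ b a h := (Submodule.mkQ _).comp (LinearMap.single K (fun b : {b // E a b} => U.Y b) ⟨b, h⟩)

/-- The reflection functor given by kernels. -/
abbrev Ker (U : QRep K E) : QRep K (fl E) where
  X b := LinearMap.ker (U.sum b)
  Y := U.X
  xg := inferInstance
  yg := inferInstance
  xm := inferInstance
  ym := inferInstance
  xf := inferInstance
  yf := inferInstance
  φ b a h := (LinearMap.proj (⟨a, h⟩ : {a // E a b})).comp (Submodule.subtype _)

theorem Ker_inj (U : QRep K E) : (Ker U).Inj := by
  intro b u v h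
  apply Subtype.ext
  funext a
  exact congrFun h a

theorem Ker_inj_apply (U : QRep K E) (b : I) (u : LinearMap.ker (U.sum b)) :
    (Ker U).inj b u = (u : ∀ a : {a // E a b}, U.X a) := rfl

/-- the projection onto the cokernel -/
abbrev cokMk (U : QRep K E) (a : I) : (∀ b : {b // E a b}, U.Y b) →ₗ[K] (Cok U).Y a :=
  Submodule.mkQ _

theorem cokMk_surj (U : QRep K E) (a : I) : Function.Surjective (cokMk U a) :=
  Submodule.mkQ_surjective _

theorem cokMk_eq_zero (U : QRep K E) (a : I) (z) : cokMk U a z = 0 ↔ ∃ u, U.inj a u = z := by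
  unfold cokMk
  rw [Submodule.mkQ_apply, Submodule.Quotient.mk_eq_zero]; rfl

theorem cokMk_single (U : QRep K E) (a b : I) (h : E a b) (u : U.Y b) :
    (Cok U).φ b a h u = cokMk U a (Pi.single (⟨b, h⟩ : {b // E a b}) u) := rfl

theorem cokMk_eq_sum (U : QRep K E) (a : I) (z : ∀ b : {b // E a b}, U.Y b) :
    cokMk U a z = ∑ b : {b // E a b}, (Cok U).φ b.1 a b.2 (z b) := by
  conv_lhs => rw [← Finset.univ_sum_single z]
  rw [map_sum]
  rfl

/-- maps out of the cokernel -/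
theorem exists_cok_desc (U : QRep K E) (a : I) {Z : Type} [AddCommGroup Z] [Module K Z]
    (f : (∀ b : {b // E a b}, U.Y b) →ₗ[K] Z) (hf : ∀ u, f (U.inj a u) = 0) :
    ∃ g : (Cok U).Y a →ₗ[K] Z, ∀ z, g (cokMk U a z) = f z := by
  refine ⟨Submodule.liftQ _ f ?_, fun z => ?_⟩
  · rintro _ ⟨u, rfl⟩; exact hf u
  · exact Submodule.liftQ_apply _ f z

/-- A hom out of a cokernel representation is determined by, and can be defined from, its
source components. -/
theorem exists_cok_hom (U : QRep K E) (V : QRep K (fl E)) (x : ∀ a, U.Y a →ₗ[K] V.X a)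
    (hx : ∀ a u, ∑ b : {b // E a b}, V.φ b.1 a b.2 (x b (U.φ a b b.2 u)) = 0) :
    ∃ g : QHom (Cok U) V, g.x = x := by
  have h : ∀ a, ∃ g : (Cok U).Y a →ₗ[K] V.Y a, ∀ z, g (cokMk U a z) =
      ∑ b : {b // E a b}, V.φ b.1 a b.2 (x b (z b)) := by
    intro a
    obtain ⟨g, hg⟩ := exists_cok_desc U a
      (∑ b : {b // E a b}, (V.φ b.1 a b.2).comp ((x b).comp (LinearMap.proj b))) (fun u => by
        simpa [LinearMap.sum_apply, QRep.inj_apply] using hx a u)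
    exact ⟨g, fun z => by rw [hg]; simp [LinearMap.sum_apply]⟩
  choose g hg using h
  refine ⟨⟨x, g, fun b a h u => ?_⟩, rfl⟩
  rw [cokMk_single, hg, Finset.sum_eq_single (⟨b, h⟩ : {b // E a b})]
  · simp
  · intro c _ hc; rw [Pi.single_eq_of_ne hc]; simp
  · simp

theorem cok_hom_ext {U : QRep K E} {V : QRep K (fl E)} {f g : QHom (Cok U) V}
    (h : ∀ a u, f.x a u = g.x a u) : f = g := by
  apply QHom.ext' h
  intro a u
  obtain ⟨z, rfl⟩ := cokMk_surj U a u
  rw [cokMk_eq_sum, map_sum, map_sum]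
  refine Finset.sum_congr rfl fun b _ => ?_
  rw [f.comm, g.comm, h]

def QHom.zero (U V : QRep K E) : QHom U V := ⟨fun _ => 0, fun _ => 0, fun _ _ _ _ => by simp⟩

theorem cok_hom_zero {U : QRep K E} {V : QRep K (fl E)} {f : QHom (Cok U) V}
    (h : ∀ a u, f.x a u = 0) : f.IsZ := by
  have : f = QHom.zero _ _ := cok_hom_ext (fun a u => by rw [h]; rfl)
  rw [this]
  exact ⟨fun _ _ => rfl, fun _ _ => rfl⟩

/-- functoriality of `Cok` -/
theorem exists_cokMap {U V : QRep K E} (f : QHom U V) : ∃ g : QHom (Cok U) (Cok V), g.x = f.y := by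
  apply exists_cok_hom U (Cok V)
  intro a u
  have := cokMk_eq_sum V a (V.inj a (f.x a u))
  rw [(cokMk_eq_zero V a _).2 ⟨_, rfl⟩] at this
  rw [this]
  refine Finset.sum_congr rfl fun b _ => ?_
  rw [f.comm]; rfl

def cokMap {U V : QRep K E} (f : QHom U V) : QHom (Cok U) (Cok V) := (exists_cokMap f).choose
theorem cokMap_x {U V : QRep K E} (f : QHom U V) : (cokMap f).x = f.y := (exists_cokMap f).choose_spec

theorem QIso.cok {U V : QRep K E} (h : QIso U V) : QIso (Cok U) (Cok V) := by
  obtain ⟨f, g, h1, h2⟩ := h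
  refine ⟨cokMap f, cokMap g, cok_hom_ext ?_, cok_hom_ext ?_⟩
  · intro a u
    change (cokMap g).x a ((cokMap f).x a u) = _
    rw [cokMap_x, cokMap_x]
    exact congrArg (fun k : QHom U U => k.y a u) h1
  · intro a u
    change (cokMap f).x a ((cokMap g).x a u) = _
    rw [cokMap_x, cokMap_x]
    exact congrArg (fun k : QHom V V => k.y a u) h2

/-- Adjunction: a hom to the kernel representation gives a hom from the cokernel one. -/
theorem exists_adj {U : QRep K E} {W : QRep K (fl E)} (g : QHom W (Ker U)) :
    ∃ k : QHom (Cok W) U, k.x = g.y := by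
  apply exists_cok_hom (E := fl E) W U
  intro a u
  have h : U.sum a (g.x a u).1 = 0 := (g.x a u).2
  rw [QRep.sum_apply] at h
  rw [← h]
  refine Finset.sum_congr rfl fun b _ => ?_
  congr 1
  exact g.comm a b b.2 u

/-- Homs between cokernels restrict. -/
theorem exists_restrict {U V : QRep K E} (hV : V.Inj) (g : QHom (Cok U) (Cok V)) :
    ∃ k : QHom U V, k.y = g.x := by
  have h : ∀ a, ∃ k : U.X a →ₗ[K] V.X a, ∀ u b, V.inj a (k u) b = g.x b (U.φ a b b.2 u) := by
    intro a
    let t : U.X a →ₗ[K] (∀ b : {b // E a b}, V.Y b) :=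
      LinearMap.pi fun b : {b // E a b} => (g.x b).comp (U.φ a b b.2)
    have ht : ∀ u, t u ∈ LinearMap.range (V.inj a) := by
      intro u
      have h1 : cokMk U a (U.inj a u) = 0 := (cokMk_eq_zero U a _).2 ⟨u, rfl⟩
      have h2 : g.y a (cokMk U a (U.inj a u)) = 0 := by rw [h1, map_zero]
      rw [cokMk_eq_sum, map_sum] at h2
      have h3 : cokMk V a (t u) = 0 := by
        rw [cokMk_eq_sum, ← h2]
        refine Finset.sum_congr rfl fun b _ => ?_
        rw [g.comm]; rfl
      exact (cokMk_eq_zero V a _).1 h3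
    let eqv := LinearEquiv.ofInjective (V.inj a) (hV a)
    refine ⟨eqv.symm.toLinearMap.comp (t.codRestrict _ ht), fun u b => ?_⟩
    have : V.inj a (eqv.symm (t.codRestrict _ ht u)) = t u := by
      have := congrArg Subtype.val (eqv.apply_symm_apply (t.codRestrict _ ht u))
      exact this
    change V.inj a (eqv.symm (t.codRestrict _ ht u)) b = _
    rw [this]; rfl
  choose k hk using h
  exact ⟨⟨k, g.x, fun a b h u => (hk a u ⟨b, h⟩).symm⟩, rfl⟩

/-- Simple representation at a sink. -/
abbrev Simp (K : Type) [Field K] {I : Type} (E : I → I → Prop) (v : I) : QRep K E where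
  X _ := PUnit
  Y b := ↥(if b = v then (⊤ : Submodule K K) else ⊥)
  xg := inferInstance
  yg := inferInstance
  xm := inferInstance
  ym := inferInstance
  xf := inferInstance
  yf := inferInstance
  φ _ _ _ := 0

theorem Simp_Y_sub (v b : I) (h : b ≠ v) : Subsingleton ((Simp K E v).Y b) := by
  change Subsingleton ↥(if b = v then (⊤ : Submodule K K) else ⊥)
  rw [if_neg h]; infer_instance

def simpGen (E : I → I → Prop) (v : I) : (Simp K E v).Y v :=
  ⟨1, by rw [if_pos rfl]; trivial⟩

theorem simpGen_span (v : I) (u : (Simp K E v).Y v) : ∃ c : K, u = c • simpGen E v := by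
  refine ⟨u.1, Subtype.ext ?_⟩
  change u.1 = u.1 • (1 : K)
  simp

/-- the preprojective representations -/
def pre (K : Type) [Field K] {I : Type} [Fintype I] : ℕ → (E : I → I → Prop) → I → QRep K E
  | 0, E, v => Simp K E v
  | k + 1, E, v => Cok (pre K k (fl E) v)

def Brick (U : QRep K E) : Prop :=
  ∀ g : QHom U U, ∃ c : K, (∀ a u, g.x a u = c • u) ∧ ∀ a u, g.y a u = c • u

theorem brick_simp (v : I) : Brick (Simp K E v) := by
  intro g
  obtain ⟨c, hc⟩ := simpGen_span v (g.y v (simpGen E v))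
  refine ⟨c, fun a u => Subsingleton.elim (α := PUnit) _ _, fun a u => ?_⟩
  by_cases h : a = v
  · subst h
    obtain ⟨d, rfl⟩ := simpGen_span a u
    rw [map_smul, hc, smul_comm]
  · have := Simp_Y_sub (K := K) (E := E) v a h
    exact Subsingleton.elim _ _

theorem brick_cok {U : QRep K E} (h : Brick U) (hi : U.Inj) : Brick (Cok U) := by
  intro g
  obtain ⟨k, hk⟩ := exists_restrict hi g
  obtain ⟨c, hx, hy⟩ := h k
  have hgx : ∀ a u, g.x a u = c • u := by
    intro a u; rw [← hk]; exact hy a u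
  refine ⟨c, hgx, fun a u => ?_⟩
  obtain ⟨z, rfl⟩ := cokMk_surj U a u
  rw [cokMk_eq_sum, map_sum, Finset.smul_sum]
  refine Finset.sum_congr rfl fun b _ => ?_
  rw [g.comm, hgx, map_smul]

theorem isZero_cok_of {U : QRep K E} (h : ∀ a, Subsingleton (U.Y a)) : QIsZero (Cok U) := by
  refine ⟨h, fun a => ⟨fun x y => ?_⟩⟩
  obtain ⟨z, rfl⟩ := cokMk_surj U a x
  obtain ⟨w, rfl⟩ := cokMk_surj U a y
  congr 1
  funext b
  exact (h b).elim _ _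

theorem brick_inj {U : QRep K E} (h : Brick U) (hz : ¬ QIsZero (Cok U)) : U.Inj := by
  intro a
  rw [← LinearMap.ker_eq_bot]
  by_contra hne
  apply hz
  obtain ⟨p, hp⟩ := Submodule.exists_isCompl (LinearMap.ker (U.inj a))
  obtain ⟨n, hn, hn0⟩ := Submodule.exists_mem_ne_zero_of_ne_bot hne
  let pr := (LinearMap.ker (U.inj a)).subtype.comp (Submodule.projectionOnto _ p hp)
  let xx : ∀ c, U.X c →ₗ[K] U.X c := Function.update (fun _ => 0) a pr
  let g : QHom U U := ⟨xx, fun _ => 0, fun c b hcb u => by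
    by_cases hc : c = a
    · subst hc
      have h1 : xx c = pr := by simp [xx]
      rw [h1]
      have : U.inj c (pr u) = 0 := (Submodule.projectionOnto _ p hp u).2
      have := congrFun this ⟨b, hcb⟩
      exact this.symm
    · have h1 : xx c = 0 := by simp [xx, hc]
      rw [h1]; simp⟩
  obtain ⟨c, hx, hy⟩ := h g
  have h1 : g.x a n = n := by
    change xx a n = n
    have h1 : xx a = pr := by simp [xx]
    rw [h1]
    change ((Submodule.projectionOnto _ p hp) n : U.X a) = n
    have := Submodule.projectionOnto_apply_left hp ⟨n, hn⟩
    exact congrArg Subtype.val this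
  have hc : c ≠ 0 := by
    rintro rfl
    rw [hx] at h1
    apply hn0
    rw [← h1]; simp
  apply isZero_cok_of
  intro b
  refine ⟨fun u v => ?_⟩
  have key : ∀ w : U.Y b, w = 0 := by
    intro w
    have := hy b w
    have h0 : c • w = 0 := by rw [← this]; rfl
    exact (smul_eq_zero.1 h0).resolve_left hc
  rw [key u, key v]

theorem pre_isZero_succ {k : ℕ} {v : I} (h : QIsZero (pre K k (fl E) v)) :
    QIsZero (pre K (k + 1) E v) := isZero_cok_of (U := pre K k (fl E) v) h.2

theorem pre_brick : ∀ (k : ℕ) (E : I → I → Prop) (v : I), ¬ QIsZero (pre K k E v) →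
    Brick (pre K k E v)
  | 0, E, v, _ => brick_simp v
  | k + 1, E, v, h => by
    have hb := pre_brick k (fl E) v (fun h' => h (pre_isZero_succ h'))
    exact brick_cok (U := pre K k (fl E) v) hb (brick_inj hb h)

theorem pre_inj (k : ℕ) (E : I → I → Prop) (v : I) (h : ¬ QIsZero (pre K (k + 1) (fl E) v)) :
    (pre K k E v).Inj := by
  have hb := pre_brick k E v (fun h' => h (pre_isZero_succ (E := fl E) h'))
  exact brick_inj hb h

theorem pre_hom_zero : ∀ (k : ℕ) (E : I → I → Prop) (l : ℕ) (v w : I), k < l →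
    ¬ QIsZero (pre K k E v) → ∀ g : QHom (pre K l E w) (pre K k E v), g.IsZ
  | 0, E, l + 1, v, w, _, _, g => by
    exact cok_hom_zero (U := pre K l (fl E) w) (fun a u => Subsingleton.elim (α := PUnit) _ _)
  | k + 1, E, l + 1, v, w, hkl, hz, g => by
    have hi : (pre K k (fl E) v).Inj := pre_inj k (fl E) v hz
    obtain ⟨g', hg'⟩ := exists_restrict (U := pre K l (fl E) w) hi g
    have := pre_hom_zero k (fl E) l v w (by omega) (fun h' => hz (pre_isZero_succ h')) g'
    apply cok_hom_zero (U := pre K l (fl E) w)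
    intro a u
    rw [← hg']; exact this.2 a u

def Rigid (U : QRep K E) : Prop :=
  ∀ h : ∀ a b, E a b → U.X a →ₗ[K] U.Y b, ∃ (u : ∀ a, U.X a →ₗ[K] U.X a)
    (v : ∀ b, U.Y b →ₗ[K] U.Y b), ∀ a b (hab : E a b) z,
      h a b hab z = U.φ a b hab (u a z) + v b (U.φ a b hab z)

theorem rigid_cok {U : QRep K E} (hU : Rigid U) : Rigid (Cok U) := by
  intro h
  -- lift
  have hk : ∀ a, ∃ k : (∀ b : {b // E a b}, U.Y b) →ₗ[K] (∀ b : {b // E a b}, U.Y b),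
      ∀ b (hab : E a b) z, cokMk U a (k (Pi.single (⟨b, hab⟩ : {b // E a b}) z)) = h b a hab z := by
    intro a
    obtain ⟨s, hs⟩ := (cokMk U a).exists_rightInverse_of_surjective
      (LinearMap.range_eq_top.2 (cokMk_surj U a))
    let hh : (∀ b : {b // E a b}, U.Y b) →ₗ[K] (Cok U).Y a :=
      LinearMap.lsum K (fun b : {b // E a b} => U.Y b) K fun b => h b a b.2
    refine ⟨s.comp hh, fun b hab z => ?_⟩
    have := LinearMap.congr_fun hs (hh (Pi.single (⟨b, hab⟩ : {b // E a b}) z))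
    refine this.trans ?_
    change hh (Pi.single (⟨b, hab⟩ : {b // E a b}) z) = _
    simp only [hh]
    exact LinearMap.lsum_piSingle K _ K (fun b : {b // E a b} => h b a b.2) ⟨b, hab⟩ z
  choose k hk using hk
  obtain ⟨u, v, huv⟩ := hU fun a b hab =>
    (LinearMap.proj (⟨b, hab⟩ : {b // E a b})).comp ((k a).comp (U.inj a))
  have hw : ∀ a, ∃ w : (Cok U).Y a →ₗ[K] (Cok U).Y a, ∀ z, w (cokMk U a z) =
      cokMk U a (k a z - fun b : {b // E a b} => v b (z b)) := by
    intro a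
    refine exists_cok_desc U a ((cokMk U a).comp (k a - LinearMap.pi fun b : {b // E a b} =>
      (v b).comp (LinearMap.proj b))) ?_
    intro z
    refine (cokMk_eq_zero U a _).2 ⟨u a z, ?_⟩
    funext b
    have := huv a b b.2 z
    simp only [LinearMap.comp_apply, LinearMap.proj_apply] at this
    change _ = k a (U.inj a z) b - v b (U.φ a b b.2 z)
    rw [this, QRep.inj_apply]
    abel
  choose w hw using hw
  refine ⟨v, w, fun b a hab z => ?_⟩
  rw [cokMk_single, cokMk_single, hw, ← hk, ← map_add]
  congr 1
  have : (fun c : {b // E a b} => v c ((Pi.single (⟨b, hab⟩ : {b // E a b}) z : ∀ b : {b // E a b}, U.Y b) c)) =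
      (Pi.single (⟨b, hab⟩ : {b // E a b}) (v b z) : ∀ b : {b // E a b}, U.Y b) := by
    funext c
    by_cases hc : c = ⟨b, hab⟩
    · subst hc; simp
    · rw [Pi.single_eq_of_ne hc, Pi.single_eq_of_ne hc, map_zero]
  rw [this]; abel

theorem pre_rigid : ∀ (k : ℕ) (E : I → I → Prop) (v : I), Rigid (pre K k E v)
  | 0, E, v => by
    intro h
    refine ⟨0, 0, fun a b hab z => ?_⟩
    have : z = 0 := Subsingleton.elim (α := PUnit) _ _
    subst this
    simp
  | k + 1, E, v => rigid_cok (U := pre K k (fl E) v) (pre_rigid k (fl E) v)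

def Supp (c : I → Bool) (s : Bool) (U : QRep K E) : Prop :=
  (∀ a, c a ≠ s → Subsingleton (U.X a)) ∧ ∀ a, c a = s → Subsingleton (U.Y a)

theorem pre_supp (c : I → Bool) : ∀ (k : ℕ) (E : I → I → Prop) (v : I),
    (∀ a b, E a b → c a ≠ c b) → Supp c (xor (decide (k % 2 = 0)) (c v)) (pre K k E v)
  | 0, E, v, _ => by
    refine ⟨fun a _ => (inferInstance : Subsingleton PUnit), fun a ha => Simp_Y_sub v a ?_⟩
    rintro rfl
    simp at ha
  | k + 1, E, v, hc => by
    have ih := pre_supp c k (fl E) v (fun a b h => (hc b a h).symm)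
    have hpar : (xor (decide ((k+1) % 2 = 0)) (c v)) = !(xor (decide (k % 2 = 0)) (c v)) := by
      rcases Nat.mod_two_eq_zero_or_one k with h | h
      · have : (k+1) % 2 = 1 := by omega
        simp [h, this]
      · have : (k+1) % 2 = 0 := by omega
        simp [h, this]
    rw [hpar]
    refine ⟨fun a ha => ih.2 a (by simpa using ha), fun a ha => ⟨fun x y => ?_⟩⟩
    obtain ⟨z, rfl⟩ := cokMk_surj (pre K k (fl E) v) a x
    obtain ⟨w, rfl⟩ := cokMk_surj (pre K k (fl E) v) a y
    congr 1
    funext b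
    have hb := hc b a b.2
    refine (ih.2 b ?_).elim _ _
    rw [ha] at hb
    cases h1 : c b <;> cases h2 : (xor (decide (k % 2 = 0)) (c v)) <;> simp_all

/-! Finiteness -/

def Ind (U : QRep K E) : Prop :=
  ¬ QIsZero U ∧ ∀ g : QHom U U, g.comp g = g → g.IsZ ∨ g = QHom.id U

theorem ind_cases {U : QRep K E} (h : Ind U) : (∃ v, QIso U (Simp K E v)) ∨
    ∀ b, Function.Surjective (U.sum b) := by
  by_cases hs : ∀ b, Function.Surjective (U.sum b)
  · exact Or.inr hs
  left
  push Not at hs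
  obtain ⟨v, hv⟩ := hs
  refine ⟨v, ?_⟩
  have hv' : LinearMap.range (U.sum v) < ⊤ := by
    rw [lt_top_iff_ne_top, ne_eq, LinearMap.range_eq_top]; exact hv
  obtain ⟨ℓ, hℓ0, hℓ⟩ := Submodule.exists_le_ker_of_lt_top _ hv'
  obtain ⟨y, hy⟩ : ∃ y, ℓ y = 1 := by
    obtain ⟨z, hz⟩ : ∃ z, ℓ z ≠ 0 := by
      by_contra hcon; push Not at hcon; exact hℓ0 (LinearMap.ext hcon)
    exact ⟨(ℓ z)⁻¹ • z, by simp [hz]⟩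
  have hℓφ : ∀ a (hab : E a v) u, ℓ (U.φ a v hab u) = 0 := by
    intro a hab u
    apply hℓ
    refine ⟨Pi.single (⟨a, hab⟩ : {a // E a v}) u, ?_⟩
    exact LinearMap.lsum_piSingle K _ K (fun a : {a // E a v} => U.φ a v a.2) ⟨a, hab⟩ u
  let yy : ∀ b, U.Y b →ₗ[K] U.Y b := Function.update (fun _ => 0) v (ℓ.smulRight y)
  have hyv : yy v = ℓ.smulRight y := by simp [yy]
  have hyn : ∀ b, b ≠ v → yy b = 0 := fun b hb => by simp [yy, hb]
  let g : QHom U U := ⟨fun _ => 0, yy, fun a b hab u => by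
    by_cases hb : b = v
    · subst hb; rw [hyv]; simp [hℓφ]
    · rw [hyn b hb]; simp⟩
  have hgg : g.comp g = g := by
    apply QHom.ext'
    · intro a u; rfl
    · intro b u
      change yy b (yy b u) = yy b u
      by_cases hb : b = v
      · subst hb; rw [hyv]; simp [hy]
      · rw [hyn b hb]; simp
  rcases h.2 g hgg with hz | hid
  · exfalso
    have := hz.2 v y
    change yy v y = 0 at this
    rw [hyv] at this
    simp [hy] at this
    rw [this] at hy; simp at hy
  have hX : ∀ a (u : U.X a), u = 0 := by
    intro a u
    exact (congrArg (fun k : QHom U U => k.x a u) hid).symm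
  have hY : ∀ b (u : U.Y b), u = yy b u := by
    intro b u
    exact (congrArg (fun k : QHom U U => k.y b u) hid).symm
  let f : QHom U (Simp K E v) := ⟨fun _ => 0, Function.update (fun _ => 0) v (ℓ.smulRight (simpGen E v)),
    fun a b hab u => by
      have hu := hX a u
      rw [hu]; simp⟩
  let f' : QHom (Simp K E v) U := ⟨fun _ => 0, Function.update (fun _ => 0) v
    ((LinearMap.toSpanSingleton K _ y).comp (Submodule.subtype _)),
    fun a b hab u => by
      have hu : u = 0 := Subsingleton.elim (α := PUnit) _ _
      rw [hu, map_zero, map_zero, map_zero, map_zero]⟩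
  have hfv : f.y v = ℓ.smulRight (simpGen E v) := by simp [f]
  have hfv' : f'.y v = (LinearMap.toSpanSingleton K _ y).comp (Submodule.subtype _) := by
    simp only [f', Function.update_self]
  refine ⟨f, f', QHom.ext' ?_ ?_, QHom.ext' ?_ ?_⟩
  · intro a u; exact (hX a u).symm
  · intro b u
    change f'.y b (f.y b u) = u
    by_cases hb : b = v
    · subst hb
      rw [hfv, hfv']
      conv_rhs => rw [hY b u, hyv]
      simp [simpGen]
    · rw [hY b u, hyn b hb]; simp
  · intro a u; exact Subsingleton.elim (α := PUnit) _ _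
  · intro b u
    change f.y b (f'.y b u) = u
    by_cases hb : b = v
    · subst hb
      obtain ⟨c, rfl⟩ := simpGen_span b u
      rw [hfv, hfv']
      simp [simpGen, hy]
    · have := Simp_Y_sub (K := K) (E := E) v b hb
      exact Subsingleton.elim _ _

theorem exists_counit (U : QRep K E) : ∃ g : QHom (Cok (Ker U)) U, g.x = fun _ => LinearMap.id := by
  obtain ⟨k, hk⟩ := exists_adj (QHom.id (Ker U))
  exact ⟨k, hk⟩

theorem iso_cok_ker {U : QRep K E} (hs : ∀ b, Function.Surjective (U.sum b)) :
    QIso (Cok (Ker U)) U := by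
  obtain ⟨g, hg⟩ := exists_counit U
  have hgy : ∀ b z, g.y b (cokMk (Ker U) b z) = U.sum b z := by
    intro b z
    rw [cokMk_eq_sum, map_sum, QRep.sum_apply]
    refine Finset.sum_congr rfl fun a _ => ?_
    rw [g.comm, hg]; rfl
  have hbij : ∀ b, Function.Bijective (g.y b) := by
    intro b
    constructor
    · rw [injective_iff_map_eq_zero]
      intro y hy
      obtain ⟨z, rfl⟩ := cokMk_surj (Ker U) b y
      rw [hgy] at hy
      exact (cokMk_eq_zero (Ker U) b z).2 ⟨⟨z, hy⟩, rfl⟩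
    · intro y
      obtain ⟨z, rfl⟩ := hs b y
      exact ⟨_, hgy b z⟩
  let eq := fun b => LinearEquiv.ofBijective (g.y b) (hbij b)
  refine ⟨g, ⟨fun _ => LinearMap.id, fun b => (eq b).symm.toLinearMap, fun a b hab u => ?_⟩,
    QHom.ext' ?_ ?_, QHom.ext' ?_ ?_⟩
  · apply (eq b).injective
    change eq b ((eq b).symm _) = g.y b _
    rw [LinearEquiv.apply_symm_apply, g.comm, hg]; rfl
  · intro a u
    change g.x a u = u
    rw [hg]; rfl
  · intro b u
    exact (eq b).symm_apply_apply u
  · intro a u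
    change g.x a u = u
    rw [hg]; rfl
  · intro b u
    exact (eq b).apply_symm_apply u

theorem ind_ker {U : QRep K E} (h : Ind U) (hs : ∀ b, Function.Surjective (U.sum b)) :
    Ind (Ker U) := by
  obtain ⟨f, f', h1, h2⟩ := iso_cok_ker hs
  have inj_ext : ∀ {W : QRep K (fl E)} (k l : QHom W (Ker U)), (∀ a u, k.y a u = l.y a u) → k = l := by
    intro W k l hkl
    apply QHom.ext' _ hkl
    intro b u
    apply Ker_inj U b
    funext a
    rw [QRep.inj_apply, QRep.inj_apply, ← k.comm, ← l.comm, hkl]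
  constructor
  · intro hz
    apply h.1
    have := isZero_cok_of hz.2
    constructor
    · exact hz.2
    · intro b
      refine ⟨fun u v => ?_⟩
      obtain ⟨z, rfl⟩ := hs b u
      obtain ⟨w, rfl⟩ := hs b v
      congr 1
      funext a
      exact (hz.2 a).elim _ _
  · intro g hg
    have hgg : (cokMap g).comp (cokMap g) = cokMap g := by
      apply cok_hom_ext
      intro a u
      change (cokMap g).x a ((cokMap g).x a u) = _
      rw [cokMap_x]
      exact congrArg (fun k : QHom (Ker U) (Ker U) => k.y a u) hg
    let k : QHom U U := f.comp ((cokMap g).comp f')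
    have hk : k.comp k = k := by
      have : k.comp k = f.comp ((cokMap g).comp ((f'.comp f).comp ((cokMap g).comp f'))) := rfl
      rw [this, h1]
      have : f.comp ((cokMap g).comp ((QHom.id _).comp ((cokMap g).comp f'))) =
        f.comp (((cokMap g).comp (cokMap g)).comp f') := rfl
      rw [this, hgg]
    have hback : cokMap g = f'.comp (k.comp f) := by
      have : f'.comp (k.comp f) = (f'.comp f).comp ((cokMap g).comp (f'.comp f)) := rfl
      rw [this, h1]; rfl
    rcases h.2 k hk with hz | hid
    · left
      have : g = QHom.zero _ _ := by
        apply inj_ext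
        intro a u
        rw [← cokMap_x, hback]
        change f'.x a (k.x a (f.x a u)) = 0
        rw [hz.1, map_zero]
      rw [this]
      exact ⟨fun _ _ => rfl, fun _ _ => rfl⟩
    · right
      apply inj_ext
      intro a u
      rw [← cokMap_x, hback, hid]
      exact congrArg (fun k : QHom (Cok (Ker U)) (Cok (Ker U)) => k.x a u) h1

theorem fin_lemma : ∀ (k : ℕ) (E : I → I → Prop) (U : QRep K E), Ind U →
    (∀ v (g : QHom (pre K k E v) U), g.IsZ) → (∀ v (g : QHom (pre K (k + 1) E v) U), g.IsZ) →
    ∃ j v, QIso U (pre K j E v)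
  | 0, E, U, hU, h0, h1 => by
    exfalso
    have hY : ∀ b (y : U.Y b), y = 0 := by
      intro b y
      let g : QHom (Simp K E b) U := ⟨fun _ => 0, Function.update (fun _ => 0) b
        ((LinearMap.toSpanSingleton K _ y).comp (Submodule.subtype _)),
        fun a c hac u => by
          have hu : u = 0 := Subsingleton.elim (α := PUnit) _ _
          rw [hu, map_zero, map_zero, map_zero, map_zero]⟩
      have := (h0 b g).2 b (simpGen E b)
      have h2 : g.y b = (LinearMap.toSpanSingleton K _ y).comp (Submodule.subtype _) := by
        simp only [g, Function.update_self]
      rw [h2] at this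
      exact (one_smul K y).symm.trans this
    apply hU.1
    refine ⟨fun a => ⟨fun u v => ?_⟩, fun b => ⟨fun u v => by rw [hY b u, hY b v]⟩⟩
    have hX : ∀ x : U.X a, x = 0 := by
      intro x
      obtain ⟨g, hg⟩ := exists_cok_hom (Simp K (fl E) a) U (Function.update (fun _ => 0) a
        ((LinearMap.toSpanSingleton K _ x).comp (Submodule.subtype _))) (fun b u => hY _ _)
      have := (h1 a g).1 a (simpGen (fl E) a)
      rw [hg, Function.update_self] at this
      exact (one_smul K x).symm.trans this
    rw [hX u, hX v]
  | k + 1, E, U, hU, h0, h1 => by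
    rcases ind_cases hU with ⟨v, hv⟩ | hs
    · exact ⟨0, v, hv⟩
    have key : ∀ (m : ℕ), (∀ v (g : QHom (pre K (m + 1) E v) U), g.IsZ) →
        ∀ v (g : QHom (pre K m (fl E) v) (Ker U)), g.IsZ := by
      intro m hm v g
      obtain ⟨k, hk⟩ := exists_adj g
      have hz := hm v k
      have hy : ∀ a u, g.y a u = 0 := by
        intro a u; rw [← hk]; exact hz.1 a u
      refine ⟨fun b u => ?_, hy⟩
      apply Ker_inj U b
      funext a
      rw [QRep.inj_apply, ← g.comm, hy, map_zero]; rfl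
    obtain ⟨j, v, hj⟩ := fin_lemma k (fl E) (Ker U) (ind_ker hU hs) (key k h0) (key (k + 1) h1)
    exact ⟨j + 1, v, (iso_cok_ker hs).symm.trans hj.cok⟩

end BGP

/-! ### Bongartz completion, module-theoretically -/
section Bongartz
open Classical

/-- the submodule `J M` -/
def jt (J : Ideal R) (M : Type) [AddCommGroup M] [Module R M] : Submodule R M :=
  Submodule.span R {x | ∃ j ∈ J, ∃ m : M, x = j • m}

variable {J : Ideal R}
variable {M : Type} [AddCommGroup M] [Module R M]
variable {N : Type} [AddCommGroup N] [Module R N]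
variable {L : Type} [AddCommGroup L] [Module R L]

theorem jt_mem {j : R} (hj : j ∈ J) (m : M) : j • m ∈ jt J M :=
  Submodule.subset_span ⟨j, hj, m, rfl⟩

theorem jt_map (h : M →ₗ[R] N) {x : M} (hx : x ∈ jt J M) : h x ∈ jt J N := by
  have : jt J M ≤ (jt J N).comap h := by
    refine Submodule.span_le.2 ?_
    rintro _ ⟨j, hj, m, rfl⟩
    change h (j • m) ∈ jt J N
    rw [map_smul]; exact jt_mem hj _
  exact this hx

theorem jt_smul (hJ : ∀ x ∈ J, ∀ r, ∀ y ∈ J, x * r * y = 0) {j : R} (hj : j ∈ J) {x : M}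
    (hx : x ∈ jt J M) : j • x = 0 := by
  have : ∀ r : R, (j * r) • x = 0 := by
    refine Submodule.span_induction (p := fun x _ => ∀ r : R, (j * r) • x = 0) ?_ ?_ ?_ ?_ hx
    · rintro _ ⟨k, hk, m, rfl⟩ r
      rw [smul_smul, hJ j hj r k hk, zero_smul]
    · intro r; simp
    · intro x y _ _ hx hy r; rw [smul_add, hx, hy, add_zero]
    · intro a x _ hx r; rw [smul_smul, mul_assoc]; exact hx _
  simpa using this 1

theorem jt_kill {x : M} (hx : x ∈ jt J M) (h : M →ₗ[R] N) (hh : ∀ j ∈ J, ∀ m, j • h m = 0) :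
    h x = 0 := by
  have : jt J M ≤ LinearMap.ker h := by
    refine Submodule.span_le.2 ?_
    rintro _ ⟨j, hj, m, rfl⟩
    change h (j • m) = 0
    rw [map_smul]; exact hh j hj m
  exact this hx

/-- every homomorphism extends along `f` -/
def HomSurj {A B : Type} [AddCommGroup A] [Module R A] [AddCommGroup B] [Module R B]
    (f : A →ₗ[R] B) (W : Type) [AddCommGroup W] [Module R W] : Prop :=
  ∀ h : A →ₗ[R] W, ∃ k : B →ₗ[R] W, ∀ x, k (f x) = h x

/-- `N` is in `add M` -/
def InAdd (R : Type) [Ring R] (N M : Type) [AddCommGroup N] [Module R N] [AddCommGroup M]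
    [Module R M] : Prop :=
  ∃ (ι : Type) (_ : Fintype ι) (g : ι → N →ₗ[R] M) (h : ι → M →ₗ[R] N),
    ∀ x, ∑ i, h i (g i x) = x

theorem InAdd.of_retract (i : N →ₗ[R] M) (p : M →ₗ[R] N) (h : ∀ x, p (i x) = x) : InAdd R N M :=
  ⟨Unit, inferInstance, fun _ => i, fun _ => p, by simpa using h⟩

theorem InAdd.trans (h1 : InAdd R L N) (h2 : InAdd R N M) : InAdd R L M := by
  obtain ⟨ι, _, g, h, hh⟩ := h1
  obtain ⟨κ, _, g', h', hh'⟩ := h2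
  refine ⟨ι × κ, inferInstance, fun i => (g' i.2).comp (g i.1), fun i => (h i.1).comp (h' i.2), ?_⟩
  intro x
  rw [Fintype.sum_prod_type]
  simp only [LinearMap.comp_apply]
  simp_rw [← map_sum, hh', hh]

section two
variable {P₁ P₀ : Type} [AddCommGroup P₁] [Module R P₁] [AddCommGroup P₀] [Module R P₀]
variable {W : Type} [AddCommGroup W] [Module R W] {W' : Type} [AddCommGroup W'] [Module R W']

theorem HomSurj.add {f : P₁ →ₗ[R] P₀} (h : HomSurj f W) (ha : InAdd R W' W) : HomSurj f W' := by
  obtain ⟨ι, _, g, k, hh⟩ := ha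
  intro l
  choose m hm using fun i => h ((g i).comp l)
  refine ⟨∑ i, (k i).comp (m i), fun x => ?_⟩
  simp only [LinearMap.sum_apply, LinearMap.comp_apply, hm, hh]

theorem HomSurj.pi {f : P₁ →ₗ[R] P₀} (h : HomSurj f W) (ι : Type) : HomSurj f (ι → W) := by
  intro l
  choose m hm using fun i => h ((LinearMap.proj i).comp l)
  exact ⟨LinearMap.pi m, fun x => funext fun i => hm i x⟩

theorem HomSurj.prod {f : P₁ →ₗ[R] P₀} (h : HomSurj f W) (h' : HomSurj f W') :
    HomSurj f (W × W') := by
  intro l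
  obtain ⟨m, hm⟩ := h ((LinearMap.fst R W W').comp l)
  obtain ⟨m', hm'⟩ := h' ((LinearMap.snd R W W').comp l)
  exact ⟨m.prod m', fun x => Prod.ext (hm x) (hm' x)⟩

theorem lift_surj [Module.Projective R M] (p : W →ₗ[R] W') (hp : Function.Surjective p)
    (h : M →ₗ[R] W') : ∃ k : M →ₗ[R] W, ∀ x, p (k x) = h x := by
  obtain ⟨k, hk⟩ := Module.projective_lifting_property p h hp
  exact ⟨k, fun x => LinearMap.congr_fun hk x⟩

theorem lift_range [Module.Projective R M] (p : W →ₗ[R] W')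
    (h : M →ₗ[R] W') (hp : ∀ x, ∃ y, p y = h x) : ∃ k : M →ₗ[R] W, ∀ x, p (k x) = h x := by
  obtain ⟨k, hk⟩ := lift_surj p.rangeRestrict p.surjective_rangeRestrict
    (h.codRestrict (LinearMap.range p) hp)
  exact ⟨k, fun x => congrArg Subtype.val (hk x)⟩

theorem HomSurj.quot [Module.Projective R P₁] {f : P₁ →ₗ[R] P₀} (h : HomSurj f W)
    (p : W →ₗ[R] W') (hp : Function.Surjective p) : HomSurj f W' := by
  intro l
  obtain ⟨l', hl'⟩ := lift_surj p hp l
  obtain ⟨k, hk⟩ := h l'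
  exact ⟨p.comp k, fun x => by simp [hk, hl']⟩

theorem desc_exact {f : P₁ →ₗ[R] P₀} {g : P₀ →ₗ[R] M} (hg : Function.Surjective g)
    (he : Function.Exact f g) (k : P₀ →ₗ[R] W) (hk : ∀ x, k (f x) = 0) :
    ∃ u : M →ₗ[R] W, ∀ x, u (g x) = k x := by
  let e := g.quotKerEquivOfSurjective hg
  have hle : LinearMap.ker g ≤ LinearMap.ker k := by
    intro x hx
    obtain ⟨y, rfl⟩ := (he x).1 hx
    exact hk y
  refine ⟨((LinearMap.ker g).liftQ k hle).comp e.symm.toLinearMap, fun x => ?_⟩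
  have : e.symm (g x) = (LinearMap.ker g).mkQ x := by
    rw [LinearEquiv.symm_apply_eq]; rfl
  change ((LinearMap.ker g).liftQ k hle) (e.symm (g x)) = _
  rw [this]; simp

end two

/-- projective presentation -/
structure Pres {P₁ P₀ M : Type} [AddCommGroup P₁] [Module R P₁] [AddCommGroup P₀] [Module R P₀]
    [AddCommGroup M] [Module R M] (f : P₁ →ₗ[R] P₀) (g : P₀ →ₗ[R] M) : Prop where
  p1 : Module.Projective R P₁
  p0 : Module.Projective R P₀
  f1 : Module.Finite R P₁
  f0 : Module.Finite R P₀
  surj : Function.Surjective g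
  exact : Function.Exact f g

theorem compare (hJ : ∀ x ∈ J, ∀ r, ∀ y ∈ J, x * r * y = 0)
    {Q₁ Q₀ Y R₁ R₀ Z W : Type} [AddCommGroup Q₁] [Module R Q₁] [AddCommGroup Q₀] [Module R Q₀]
    [AddCommGroup Y] [Module R Y] [AddCommGroup R₁] [Module R R₁] [AddCommGroup R₀] [Module R R₀]
    [AddCommGroup Z] [Module R Z] [AddCommGroup W] [Module R W]
    {q : Q₁ →ₗ[R] Q₀} {y : Q₀ →ₗ[R] Y} (hq : Pres q y) (hk : LinearMap.ker q ≤ jt J Q₁)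
    {r : R₁ →ₗ[R] R₀} {z : R₀ →ₗ[R] Z} (hr : Pres r z)
    (a : Y →ₗ[R] Z) (b : Z →ₗ[R] Y) (hba : ∀ x, b (a x) = x) (h : HomSurj r W) : HomSurj q W := by
  have := hq.p1; have := hq.p0; have := hr.p1; have := hr.p0
  have yq : ∀ x, y (q x) = 0 := fun x => hq.exact.apply_apply_eq_zero x
  have zr : ∀ x, z (r x) = 0 := fun x => hr.exact.apply_apply_eq_zero x
  obtain ⟨a0, ha0⟩ := lift_surj z hr.surj (a.comp y)
  obtain ⟨a1, ha1⟩ := lift_range r (a0.comp q) (fun x => (hr.exact _).1 (by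
    rw [LinearMap.comp_apply, ha0, LinearMap.comp_apply, yq, map_zero]))
  obtain ⟨b0, hb0⟩ := lift_surj y hq.surj (b.comp z)
  obtain ⟨b1, hb1⟩ := lift_range q (b0.comp r) (fun x => (hq.exact _).1 (by
    rw [LinearMap.comp_apply, hb0, LinearMap.comp_apply, zr, map_zero]))
  obtain ⟨s, hs⟩ := lift_range q (LinearMap.id - b0.comp a0) (fun x => (hq.exact _).1 (by
    simp [hb0, ha0, hba]))
  simp only [LinearMap.comp_apply, LinearMap.sub_apply, LinearMap.id_apply] at *
  let t : Q₁ →ₗ[R] Q₁ := LinearMap.id - b1.comp a1 - s.comp q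
  have htx : ∀ x, t x = x - b1 (a1 x) - s (q x) := fun x => rfl
  have htk : ∀ x, t x ∈ jt J Q₁ := by
    intro x
    apply hk
    rw [LinearMap.mem_ker, htx, map_sub, map_sub, hb1, ha1, hs]
    abel
  have htt : ∀ x, t (t x) = 0 := fun x => jt_kill (htk x) t (fun j hj m => jt_smul hJ hj (htk m))
  intro l
  obtain ⟨k1, hk1⟩ := h (l.comp b1)
  obtain ⟨k2, hk2⟩ := h ((l.comp t).comp b1)
  refine ⟨k1.comp a0 + l.comp s + k2.comp a0 + (l.comp t).comp s, fun x => ?_⟩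
  simp only [LinearMap.comp_apply, LinearMap.add_apply] at *
  rw [← ha1, hk1, hk2]
  have e1 : x = t x + b1 (a1 x) + s (q x) := by rw [htx]; abel
  have e2 : t x = t (b1 (a1 x)) + t (s (q x)) := by
    conv_lhs => rw [e1]
    rw [map_add, map_add, htt, zero_add]
  conv_rhs => rw [e1, e2]
  simp only [map_add]
  abel

/-- existence of covers -/
def HasCovers (J : Ideal R) : Prop :=
  ∀ (N : Type) [AddCommGroup N] [Module R N], Module.Finite R N →
    ∃ (P : Type) (_ : AddCommGroup P) (_ : Module R P) (q : P →ₗ[R] N),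
      Module.Projective R P ∧ Module.Finite R P ∧ Function.Surjective q ∧
        LinearMap.ker q ≤ jt J P

theorem exists_min_pres [IsNoetherianRing R] (hc : HasCovers J)
    (N : Type) [AddCommGroup N] [Module R N] [Module.Finite R N] :
    ∃ (Q₁ Q₀ : Type) (_ : AddCommGroup Q₁) (_ : Module R Q₁) (_ : AddCommGroup Q₀) (_ : Module R Q₀)
      (q : Q₁ →ₗ[R] Q₀) (y : Q₀ →ₗ[R] N), Pres q y ∧ LinearMap.ker q ≤ jt J Q₁ := by
  obtain ⟨Q₀, _, _, y, hp, hf, hs, -⟩ := hc N inferInstance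
  have hn : IsNoetherian R Q₀ := inferInstance
  obtain ⟨Q₁, _, _, q, hp', hf', hs', hk⟩ := hc (LinearMap.ker y) inferInstance
  refine ⟨Q₁, Q₀, _, _, _, _, (LinearMap.ker y).subtype.comp q, y, ⟨hp', hp, hf', hf, hs, ?_⟩, ?_⟩
  · intro x
    constructor
    · intro hx
      obtain ⟨z, hz⟩ := hs' ⟨x, hx⟩
      exact ⟨z, congrArg Subtype.val hz⟩
    · rintro ⟨z, rfl⟩
      exact (q z).2
  · intro x hx
    exact hk (Subtype.ext hx)

section K
variable {K : Type} [Field K] [Algebra K R]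

/-- multiplication by a scalar -/
def scal (c : K) : M →ₗ[R] M where
  toFun x := algebraMap K R c • x
  map_add' := by simp
  map_smul' r x := by
    simp only [RingHom.id_apply, smul_smul, Algebra.commutes]

theorem scal_apply (c : K) (x : M) : (scal c : M →ₗ[R] M) x = algebraMap K R c • x := rfl

variable (K) in
theorem hom_fin_gen [FiniteDimensional K R] [Module.Finite R M] [Module.Finite R N] :
    ∃ (m : ℕ) (φ : Fin m → M →ₗ[R] N), ∀ h : M →ₗ[R] N, ∃ c : Fin m → K,
      ∀ x, h x = ∑ i, algebraMap K R (c i) • φ i x := by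
  let : Module K M := Module.compHom M (algebraMap K R)
  let : Module K N := Module.compHom N (algebraMap K R)
  have : IsScalarTower K R M := ⟨fun c r m => by
    change (c • r) • m = algebraMap K R c • r • m
    rw [Algebra.smul_def, mul_smul]⟩
  have : IsScalarTower K R N := ⟨fun c r m => by
    change (c • r) • m = algebraMap K R c • r • m
    rw [Algebra.smul_def, mul_smul]⟩
  have : Module.Finite K M := Module.Finite.trans R M
  have : Module.Finite K N := Module.Finite.trans R N
  let ι : (M →ₗ[R] N) →ₗ[K] (M →ₗ[K] N) := LinearMap.restrictScalarsₗ K R M N K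
  have hι : Function.Injective ι := LinearMap.restrictScalars_injective K
  have : Module.Finite K (M →ₗ[R] N) := Module.Finite.of_injective ι hι
  obtain ⟨m, φ, hφ⟩ := Module.Finite.exists_fin (R := K) (M := M →ₗ[R] N)
  refine ⟨m, φ, fun h => ?_⟩
  have hh : h ∈ Submodule.span K (Set.range φ) := by rw [hφ]; trivial
  rw [Submodule.mem_span_range_iff_exists_fun] at hh
  obtain ⟨c, rfl⟩ := hh
  refine ⟨c, fun x => ?_⟩
  rw [LinearMap.sum_apply]
  rfl

end K
end Bongartz

section Bongartz2
open Classical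
variable {J : Ideal R} {K : Type} [Field K] [Algebra K R]
variable {P₁ P₀ X : Type} [AddCommGroup P₁] [Module R P₁] [AddCommGroup P₀] [Module R P₀]
  [AddCommGroup X] [Module R X]

/-- the universal map -/
def bF (f : P₁ →ₗ[R] P₀) {m : ℕ} (φ : Fin m → P₁ →ₗ[R] R) :
    (Fin m → P₁) →ₗ[R] ((Fin m → P₀) × R) :=
  LinearMap.prod (LinearMap.pi fun i => f.comp (LinearMap.proj i))
    (∑ i, (φ i).comp (LinearMap.proj i))

theorem bF_apply (f : P₁ →ₗ[R] P₀) {m : ℕ} (φ : Fin m → P₁ →ₗ[R] R) (p : Fin m → P₁) :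
    bF f φ p = (fun i => f (p i), ∑ i, φ i (p i)) := by
  refine Prod.ext rfl ?_
  change (∑ i, (φ i).comp (LinearMap.proj i)) p = _
  rw [LinearMap.sum_apply]
  rfl

/-- the Bongartz module -/
abbrev bB (f : P₁ →ₗ[R] P₀) {m : ℕ} (φ : Fin m → P₁ →ₗ[R] R) : Type :=
  ((Fin m → P₀) × R) ⧸ LinearMap.range (bF f φ)

def bρ (f : P₁ →ₗ[R] P₀) {m : ℕ} (φ : Fin m → P₁ →ₗ[R] R) : R →ₗ[R] bB f φ :=
  (Submodule.mkQ _).comp (LinearMap.inr R _ _)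

theorem bB_fac {f : P₁ →ₗ[R] P₀} {m : ℕ} (φ : Fin m → P₁ →ₗ[R] R)
    {N : Type} [AddCommGroup N] [Module R N] (h : HomSurj f N) (x : R →ₗ[R] N) :
    ∃ y : bB f φ →ₗ[R] N, ∀ r, y (bρ f φ r) = x r := by
  choose k hk using fun i => h (x.comp (φ i))
  let z : ((Fin m → P₀) × R) →ₗ[R] N :=
    x.comp (LinearMap.snd R _ _) - ∑ i, (k i).comp ((LinearMap.proj i).comp (LinearMap.fst R _ _))
  have hz : ∀ p, z p = x p.2 - ∑ i, k i (p.1 i) := by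
    intro p
    simp [z, LinearMap.sub_apply, LinearMap.sum_apply]
  have hle : LinearMap.range (bF f φ) ≤ LinearMap.ker z := by
    rintro _ ⟨p, rfl⟩
    rw [LinearMap.mem_ker, hz, bF_apply]
    simp only [hk, LinearMap.comp_apply, map_sum, sub_self]
  refine ⟨Submodule.liftQ _ z hle, fun r => ?_⟩
  have : Submodule.liftQ _ z hle (bρ f φ r) = z (0, r) := Submodule.liftQ_apply _ z _
  rw [this, hz]; simp

theorem bF_homSurj {f : P₁ →ₗ[R] P₀} {m : ℕ} (φ : Fin m → P₁ →ₗ[R] R)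
    {N : Type} [AddCommGroup N] [Module R N] (h : HomSurj f N) : HomSurj (bF f φ) N := by
  intro l
  choose k hk using fun i => h (l.comp (LinearMap.single R (fun _ : Fin m => P₁) i))
  refine ⟨∑ i, (k i).comp ((LinearMap.proj i).comp (LinearMap.fst R _ _)), fun p => ?_⟩
  rw [bF_apply, LinearMap.sum_apply]
  simp only [LinearMap.comp_apply, LinearMap.fst_apply, LinearMap.proj_apply, hk]
  rw [← map_sum]
  congr 1
  exact Finset.univ_sum_single p

theorem prodMap_homSurj {A B C D : Type} [AddCommGroup A] [Module R A] [AddCommGroup B] [Module R B]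
    [AddCommGroup C] [Module R C] [AddCommGroup D] [Module R D]
    {f : A →ₗ[R] B} {g : C →ₗ[R] D}
    {N : Type} [AddCommGroup N] [Module R N] (h : HomSurj f N) (h' : HomSurj g N) :
    HomSurj (f.prodMap g) N := by
  intro l
  obtain ⟨k, hk⟩ := h (l.comp (LinearMap.inl R _ _))
  obtain ⟨k', hk'⟩ := h' (l.comp (LinearMap.inr R _ _))
  refine ⟨k.coprod k', fun x => ?_⟩
  rw [LinearMap.prodMap_apply, LinearMap.coprod_apply, hk, hk']
  simp only [LinearMap.comp_apply, LinearMap.inl_apply, LinearMap.inr_apply]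
  rw [← map_add]; simp

theorem bB_homSurj {f : P₁ →ₗ[R] P₀} {g : P₀ →ₗ[R] X} (hf : Pres f g) {m : ℕ}
    (φ : Fin m → P₁ →ₗ[R] R)
    (hφ : ∀ h : P₁ →ₗ[R] R, ∃ c : Fin m → K, ∀ x, h x = ∑ i, algebraMap K R (c i) • φ i x)
    (h : HomSurj f X) : HomSurj f (bB f φ) := by
  have := hf.p1; have := hf.p0
  let mk : ((Fin m → P₀) × R) →ₗ[R] bB f φ := Submodule.mkQ _
  have mkF : ∀ p, mk (bF f φ p) = 0 := fun p => (Submodule.Quotient.mk_eq_zero _).2 ⟨p, rfl⟩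
  have hβ : ∀ β : P₁ →ₗ[R] R, ∃ k : P₀ →ₗ[R] bB f φ, ∀ x, k (f x) = mk (0, β x) := by
    intro β
    obtain ⟨c, hc⟩ := hφ β
    let d : P₀ →ₗ[R] ((Fin m → P₀) × R) := LinearMap.prod (LinearMap.pi fun i => scal (c i)) 0
    refine ⟨- mk.comp d, fun x => ?_⟩
    have h1 := mkF (fun i => algebraMap K R (c i) • x)
    rw [bF_apply] at h1
    have h2 : ((fun i => f (algebraMap K R (c i) • x), ∑ i, φ i (algebraMap K R (c i) • x)) :
        (Fin m → P₀) × R) = d (f x) + (0, β x) := by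
      rw [hc]
      refine Prod.ext ?_ ?_
      · funext i
        simp [d, scal_apply]
      · simp [d]
    rw [h2, map_add] at h1
    change - mk (d (f x)) = _
    rw [eq_comm, ← sub_eq_zero, sub_neg_eq_add, add_comm]
    exact h1
  have hα : ∀ (α : P₁ →ₗ[R] P₀) (i : Fin m), ∃ k : P₀ →ₗ[R] bB f φ, ∀ x,
      k (f x) = mk (Pi.single i (α x), 0) := by
    intro α i
    obtain ⟨k, hk⟩ := h (g.comp α)
    obtain ⟨v, hv⟩ := lift_surj g hf.surj k
    obtain ⟨u, hu⟩ := lift_range f (α - v.comp f) (fun x => (hf.exact _).1 (by simp [hv, hk]))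
    obtain ⟨k', hk'⟩ := hβ ((φ i).comp u)
    refine ⟨mk.comp ((LinearMap.inl R _ _).comp
      ((LinearMap.single R (fun _ : Fin m => P₀) i).comp v)) - k', fun x => ?_⟩
    have h1 := mkF (Pi.single i (u x))
    have h2 : bF f φ (Pi.single i (u x)) = (Pi.single i (f (u x)), φ i (u x)) := by
      rw [bF_apply]
      refine Prod.ext ?_ ?_
      · funext j
        by_cases hj : j = i
        · subst hj; simp
        · simp [hj]
      · simp only
        rw [Finset.sum_eq_single i]
        · simp
        · intro j _ hj; simp [hj]
        · simp
    have h3 : α x = v (f x) + f (u x) := by rw [hu]; simp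
    have h4 : ((Pi.single i (α x), 0) : (Fin m → P₀) × R) =
        (Pi.single i (v (f x)), 0) + bF f φ (Pi.single i (u x)) - (0, φ i (u x)) := by
      rw [h2, h3, Pi.single_add]; ext <;> simp
    rw [h4, map_sub, map_add, h1, add_zero, LinearMap.sub_apply, hk']
    rfl
  intro l
  obtain ⟨l', hl'⟩ := lift_surj mk (Submodule.mkQ_surjective _) l
  obtain ⟨kb, hkb⟩ := hβ ((LinearMap.snd R _ _).comp l')
  choose ka hka using fun i => hα ((LinearMap.proj i).comp ((LinearMap.fst R _ _).comp l')) i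
  refine ⟨kb + ∑ i, ka i, fun x => ?_⟩
  rw [LinearMap.add_apply, LinearMap.sum_apply, hkb]
  simp only [hka]
  rw [← map_sum, ← map_add, ← hl']
  congr 1
  refine Prod.ext ?_ ?_
  · simp only [Prod.fst_add, Prod.fst_sum, zero_add]
    exact Finset.univ_sum_single (l' x).1
  · simp [Prod.snd_sum]

/-- the completed module -/
theorem bT_pres {f : P₁ →ₗ[R] P₀} {g : P₀ →ₗ[R] X} (hf : Pres f g) {m : ℕ}
    (φ : Fin m → P₁ →ₗ[R] R) :
    Pres (f.prodMap (bF f φ)) (g.prodMap (Submodule.mkQ (LinearMap.range (bF f φ)))) := by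
  have := hf.p1; have := hf.p0; have := hf.f1; have := hf.f0
  have pp : Module.Projective R (Fin m → P₁) :=
    Module.Projective.of_equiv (DFinsupp.linearEquivFunOnFintype (R := R) (M := fun _ : Fin m => P₁))
  have pp : Module.Projective R (Fin m → P₀) :=
    Module.Projective.of_equiv (DFinsupp.linearEquivFunOnFintype (R := R) (M := fun _ : Fin m => P₀))
  refine ⟨inferInstance, inferInstance, inferInstance, inferInstance, ?_, ?_⟩
  · rintro ⟨x, b⟩
    obtain ⟨p, rfl⟩ := hf.surj x
    obtain ⟨q, rfl⟩ := Submodule.mkQ_surjective _ b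
    exact ⟨(p, q), rfl⟩
  · rintro ⟨p, q⟩
    rw [LinearMap.prodMap_apply, Prod.mk_eq_zero, hf.exact p, Submodule.mkQ_apply,
      Submodule.Quotient.mk_eq_zero]
    constructor
    · rintro ⟨⟨a, rfl⟩, ⟨b, rfl⟩⟩
      exact ⟨(a, b), rfl⟩
    · rintro ⟨⟨a, b⟩, h⟩
      exact ⟨⟨a, congrArg Prod.fst h⟩, ⟨b, congrArg Prod.snd h⟩⟩

end Bongartz2

section Bongartz3
open Classical
variable {J : Ideal R} {K : Type} [Field K] [Algebra K R]
variable {P₁ P₀ X : Type} [AddCommGroup P₁] [Module R P₁] [AddCommGroup P₀] [Module R P₀]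
  [AddCommGroup X] [Module R X]
variable {T N : Type} [AddCommGroup T] [Module R T] [AddCommGroup N] [Module R N]

theorem fac_homSurj {B L R₁ R₀ : Type} [AddCommGroup B] [Module R B] [AddCommGroup L] [Module R L]
    [AddCommGroup R₁] [Module R R₁] [AddCommGroup R₀] [Module R R₀] [Module.Projective R R₁]
    [Module.Finite R L] (ρ : R →ₗ[R] B)
    (hfac : ∀ x : R →ₗ[R] L, ∃ y : B →ₗ[R] L, ∀ r, y (ρ r) = x r)
    {r : R₁ →ₗ[R] R₀} (h : HomSurj r B) : HomSurj r L := by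
  obtain ⟨n, s, hs⟩ := Module.Finite.exists_fin' R L
  choose y hy using fun i => hfac (s.comp (LinearMap.single R (fun _ : Fin n => R) i))
  refine (h.pi (Fin n)).quot (∑ i, (y i).comp (LinearMap.proj i)) ?_
  intro l
  obtain ⟨c, rfl⟩ := hs l
  refine ⟨fun i => ρ (c i), ?_⟩
  rw [LinearMap.sum_apply]
  simp only [LinearMap.comp_apply, LinearMap.proj_apply, hy]
  rw [← map_sum]
  congr 1
  exact Finset.univ_sum_single c

theorem max_N [FiniteDimensional K R] [IsNoetherianRing R]
    (hJ : ∀ x ∈ J, ∀ r, ∀ y ∈ J, x * r * y = 0)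
    {f : P₁ →ₗ[R] P₀} {g : P₀ →ₗ[R] X} (hf : Pres f g) (hk : LinearMap.ker f ≤ jt J P₁) {m : ℕ}
    (φ : Fin m → P₁ →ₗ[R] R)
    (hφ : ∀ h : P₁ →ₗ[R] R, ∃ c : Fin m → K, ∀ x, h x = ∑ i, algebraMap K R (c i) • φ i x)
    (h : HomSurj f X) (hT : InAdd R (X × bB f φ) T)
    (iX : X →ₗ[R] T) (pX : T →ₗ[R] X) (hpX : ∀ x, pX (iX x) = x)
    [Module.Finite R N] {R₁ R₀ : Type} [AddCommGroup R₁] [Module R R₁] [AddCommGroup R₀]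
    [Module R R₀] {r : R₁ →ₗ[R] R₀} {z : R₀ →ₗ[R] T × N} (hr : Pres r z)
    (hrs : HomSurj r (T × N)) : InAdd R N T := by
  have := hf.p1; have := hf.p0; have := hf.f1; have := hf.f0
  have := hr.p1; have := hr.p0; have := hr.f1; have := hr.f0
  have hXf : Module.Finite R X := Module.Finite.of_surjective g hf.surj
  have rT : HomSurj r T := hrs.add (.of_retract (LinearMap.inl R T N) (LinearMap.fst R T N)
    (fun _ => rfl))
  have rN : HomSurj r N := hrs.add (.of_retract (LinearMap.inr R T N) (LinearMap.snd R T N)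
    (fun _ => rfl))
  have fN : HomSurj f N := compare hJ hf hk hr ((LinearMap.inl R T N).comp iX)
    (pX.comp (LinearMap.fst R T N)) hpX rN
  have fB : HomSurj f (bB f φ) := bB_homSurj hf φ hφ h
  have fT0 : HomSurj f (X × bB f φ) := h.prod fB
  have rT0 : HomSurj r (X × bB f φ) := rT.add hT
  have rB : HomSurj r (bB f φ) := rT0.add (.of_retract (LinearMap.inr R _ _) (LinearMap.snd R _ _)
    (fun _ => rfl))
  obtain ⟨k, s, hs⟩ := hom_fin_gen K (R := R) (M := X × bB f φ) (N := N)
  let σ : (Fin k → X × bB f φ) →ₗ[R] N := ∑ i, (s i).comp (LinearMap.proj i)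
  have hσ : ∀ t, σ t = ∑ i, s i (t i) := by
    intro t; simp [σ, LinearMap.sum_apply]
  -- every map T0 → N factors through σ
  have hσf : ∀ u : X × bB f φ →ₗ[R] N, ∃ w : X × bB f φ →ₗ[R] (Fin k → X × bB f φ),
      ∀ x, σ (w x) = u x := by
    intro u
    obtain ⟨c, hc⟩ := hs u
    refine ⟨LinearMap.pi fun i => scal (c i), fun x => ?_⟩
    rw [hσ, hc]
    refine Finset.sum_congr rfl fun i _ => ?_
    change s i (algebraMap K R (c i) • x) = _
    rw [map_smul]
  have hσs : Function.Surjective σ := by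
    intro n
    obtain ⟨y, hy⟩ := bB_fac φ fN (LinearMap.toSpanSingleton R N n)
    obtain ⟨w, hw⟩ := hσf (y.comp (LinearMap.snd R _ _))
    refine ⟨w (0, bρ f φ 1), ?_⟩
    rw [hw]
    change y (bρ f φ 1) = n
    rw [hy]; simp
  let L := LinearMap.ker σ
  have hLf : Module.Finite R L := inferInstance
  have fL : HomSurj f L := by
    intro l
    obtain ⟨k0, hk0⟩ := (fT0.pi (Fin k)) (L.subtype.comp l)
    obtain ⟨u, hu⟩ := desc_exact hf.surj hf.exact (σ.comp k0) (fun x => by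
      rw [LinearMap.comp_apply, hk0]; exact (l x).2)
    obtain ⟨w, hw⟩ := hσf (u.comp (LinearMap.fst R _ _))
    refine ⟨LinearMap.codRestrict L (k0 - w.comp ((LinearMap.inl R _ _).comp g)) ?_, ?_⟩
    · intro x
      change σ _ = 0
      simp only [LinearMap.sub_apply, LinearMap.comp_apply, map_sub, hw]
      rw [LinearMap.inl_apply, LinearMap.fst_apply, hu, LinearMap.comp_apply, sub_self]
    · intro x
      apply Subtype.ext
      change k0 (f x) - w (g (f x), 0) = _
      rw [hk0, hf.exact.apply_apply_eq_zero]
      change _ - w 0 = _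
      rw [map_zero, sub_zero]; rfl
  have rL : HomSurj r L := fac_homSurj (bρ f φ) (bB_fac φ fL) rB
  obtain ⟨m', hm'⟩ := lift_surj σ hσs ((LinearMap.snd R T N).comp z)
  obtain ⟨k', hk'⟩ := rL (LinearMap.codRestrict L (m'.comp r) (fun x => by
    change σ _ = 0
    rw [LinearMap.comp_apply, hm', LinearMap.comp_apply, hr.exact.apply_apply_eq_zero, map_zero]))
  obtain ⟨t, ht⟩ := desc_exact hr.surj hr.exact (m' - L.subtype.comp k') (fun x => by
    rw [LinearMap.sub_apply, LinearMap.comp_apply, hk']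
    exact sub_self _)
  have hst : ∀ x, σ (t x) = x.2 := by
    intro x
    obtain ⟨y, rfl⟩ := hr.surj x
    rw [ht, LinearMap.sub_apply, map_sub, hm']
    have : σ (L.subtype.comp k' y) = 0 := (k' y).2
    rw [this, sub_zero]; rfl
  refine InAdd.trans (N := X × bB f φ) ?_ hT
  refine ⟨Fin k, inferInstance, fun i => (LinearMap.proj i).comp (t.comp (LinearMap.inr R T N)), s,
    fun n => ?_⟩
  have := hst (0, n)
  rw [hσ] at this
  exact this

theorem max_Q (hJ : ∀ x ∈ J, ∀ r, ∀ y ∈ J, x * r * y = 0)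
    {f : P₁ →ₗ[R] P₀} (hk : LinearMap.ker f ≤ jt J P₁) {m : ℕ}
    (φ : Fin m → P₁ →ₗ[R] R) {Q : Type} [AddCommGroup Q] [Module R Q]
    [Module.Projective R Q] [Module.Finite R Q] (hQ : ∀ q : Q →ₗ[R] bB f φ, q = 0) :
    Subsingleton Q := by
  have h1 : ∀ (q : Q →ₗ[R] R) x, q x ∈ jt J R := by
    intro q
    have h0 := hQ ((bρ f φ).comp q)
    obtain ⟨w, hw⟩ := lift_range (bF f φ) ((LinearMap.inr R (Fin m → P₀) R).comp q) (fun x => by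
      have := LinearMap.congr_fun h0 x
      exact (Submodule.Quotient.mk_eq_zero _).1 this)
    intro x
    have h2 := hw x
    rw [bF_apply] at h2
    have h3 : q x = ∑ i, φ i (w x i) := (congrArg Prod.snd h2).symm
    rw [h3]
    refine Submodule.sum_mem _ fun i _ => jt_map _ (hk ?_)
    exact congrFun (congrArg Prod.fst h2) i
  obtain ⟨n, s, hs⟩ := Module.Finite.exists_fin' R Q
  obtain ⟨t, ht⟩ := lift_surj s hs (LinearMap.id : Q →ₗ[R] Q)
  have h2 : ∀ x : Q, x ∈ jt J Q := by
    intro x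
    have h3 : s (t x) = x := ht x
    rw [← h3, ← Finset.univ_sum_single (t x), map_sum]
    refine Submodule.sum_mem _ fun i _ => ?_
    exact jt_map (s.comp (LinearMap.single R (fun _ : Fin n => R) i))
      (h1 ((LinearMap.proj i).comp t) x)
  refine ⟨fun x y => ?_⟩
  have h3 : ∀ x : Q, x = 0 := fun x => jt_kill (h2 x) (LinearMap.id : Q →ₗ[R] Q)
    (fun j hj m => jt_smul hJ hj (h2 m))
  rw [h3 x, h3 y]

/-! categorical translation -/

def prodIso (A B : ModCat R) : (A ⊞ B : ModCat R) ≅ ModuleCat.of R (A × B) :=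
  ModuleCat.biprodIsoProd A B

theorem InAdd.mem {N M : ModCat R} (h : InAdd R N M) : MemAddMod N M := by
  obtain ⟨ι, _, g, h, hh⟩ := h
  let e := Fintype.equivFin ι
  refine ⟨Fintype.card ι, biproduct.lift fun i => ModuleCat.ofHom (g (e.symm i)),
    biproduct.desc fun i => ModuleCat.ofHom (h (e.symm i)), ?_⟩
  rw [biproduct.lift_desc]
  ext x
  rw [ModuleCat.hom_sum]
  simp only [LinearMap.sum_apply, ModuleCat.hom_comp, ModuleCat.hom_ofHom, LinearMap.comp_apply]
  rw [Equiv.sum_comp e.symm (fun i => h i (g i x)), hh]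
  rfl

theorem tauRigid_of {M : ModCat R} {P₁ P₀ : Type} [AddCommGroup P₁] [Module R P₁] [AddCommGroup P₀]
    [Module R P₀] {f : P₁ →ₗ[R] P₀} {g : P₀ →ₗ[R] M} (h : Pres f g) (hs : HomSurj f M) :
    IsTauRigidMod M := by
  refine ⟨ModuleCat.of R P₁, ModuleCat.of R P₀, ModuleCat.ofHom f, ModuleCat.ofHom g,
    (IsProjective.iff_projective _).1 h.p1, (IsProjective.iff_projective _).1 h.p0, h.f1, h.f0,
    h.surj, h.exact, fun l => ?_⟩
  obtain ⟨k, hk⟩ := hs l.hom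
  exact ⟨ModuleCat.ofHom k, by ext x; exact hk x⟩

theorem tauRigid_elim {M : ModCat R} (h : IsTauRigidMod M) {M' : Type} [AddCommGroup M']
    [Module R M'] (e : M ≅ ModuleCat.of R M') :
    ∃ (P₁ P₀ : Type) (_ : AddCommGroup P₁) (_ : Module R P₁) (_ : AddCommGroup P₀)
    (_ : Module R P₀) (f : P₁ →ₗ[R] P₀) (g : P₀ →ₗ[R] M'), Pres f g ∧ HomSurj f M' := by
  obtain ⟨P₁, P₀, f, g, p1, p0, f1, f0, hs, he, hh⟩ := h
  let E : M ≃ₗ[R] M' := e.toLinearEquiv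
  refine ⟨P₁, P₀, _, _, _, _, f.hom, E.toLinearMap.comp g.hom,
    ⟨(IsProjective.iff_projective _).2 p1, (IsProjective.iff_projective _).2 p0, f1, f0,
      E.surjective.comp hs, ?_⟩, ?_⟩
  · intro x
    rw [← (he x)]
    exact E.map_eq_zero_iff
  · intro l
    obtain ⟨k, hk⟩ := hh (ModuleCat.ofHom (E.symm.toLinearMap.comp l))
    refine ⟨E.toLinearMap.comp k.hom, fun x => ?_⟩
    have := congrArg (fun t => E (t.hom x)) hk
    refine this.trans ?_
    exact E.apply_symm_apply _

theorem bongartz [FiniteDimensional K R] [IsNoetherianRing R] [IsArtinianRing R]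
    (hJ : ∀ x ∈ J, ∀ r, ∀ y ∈ J, x * r * y = 0) (hc : HasCovers J)
    {f : P₁ →ₗ[R] P₀} {g : P₀ →ₗ[R] X} (hf : Pres f g) (hk : LinearMap.ker f ≤ jt J P₁)
    (h : HomSurj f X) (hX : Nontrivial X)
    (hsc : ∀ u : X →ₗ[R] X, ∃ c : K, ∀ x, u x = algebraMap K R c • x) :
    ∃ T : ModCat R, IsSupportTauTiltingMod T ∧ IsBasicMod T ∧ IsFGMod T ∧
      ∃ (i : X →ₗ[R] T) (p : T →ₗ[R] X), ∀ x, p (i x) = x := by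
  have := hf.p1; have := hf.p0; have := hf.f1; have := hf.f0
  have hXf : Module.Finite R X := Module.Finite.of_surjective g hf.surj
  obtain ⟨m, φ, hφ⟩ := hom_fin_gen K (R := R) (M := P₁) (N := R)
  let T0 := X × bB f φ
  have hp0 := bT_pres hf φ
  have fT0 : HomSurj f T0 := h.prod (bB_homSurj hf φ hφ h)
  have h0 : HomSurj (f.prodMap (bF f φ)) T0 := prodMap_homSurj fT0 (bF_homSurj φ fT0)
  let S : Set (ModCat R) := {T | InAdd R T0 T ∧ ∃ (i : T →ₗ[R] T0) (p : T0 →ₗ[R] T), ∀ x, p (i x) = x}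
  have hS : S.Nonempty := ⟨ModuleCat.of R T0, .of_retract LinearMap.id LinearMap.id (fun _ => rfl),
    LinearMap.id, LinearMap.id, fun _ => rfl⟩
  obtain ⟨T, ⟨hT, i, p, hip⟩, hmin⟩ := WellFounded.has_min
    (InvImage.wf (fun T : ModCat R => Module.length R T) wellFounded_lt) S hS
  have hps : Function.Surjective p := fun x => ⟨i x, hip x⟩
  have hTf : Module.Finite R T := Module.Finite.of_surjective p hps
  -- X is a summand of T
  have hXT : ∃ (i : X →ₗ[R] T) (p : T →ₗ[R] X), ∀ x, p (i x) = x := by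
    obtain ⟨ι, _, g1, h1, hh⟩ := InAdd.trans (InAdd.of_retract (LinearMap.inl R X (bB f φ))
      (LinearMap.fst R X (bB f φ)) (fun _ => rfl)) hT
    choose c hc using fun j => hsc ((h1 j).comp (g1 j))
    obtain ⟨j, hj⟩ : ∃ j, c j ≠ 0 := by
      by_contra hcon
      push Not at hcon
      obtain ⟨x, hx⟩ := exists_ne (0 : X)
      apply hx
      rw [← hh x]
      refine Finset.sum_eq_zero fun j _ => ?_
      have := hc j x
      rw [hcon j, map_zero, zero_smul] at this
      exact this
    refine ⟨g1 j, (scal (c j)⁻¹).comp (h1 j), fun x => ?_⟩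
    have := hc j x
    simp only [LinearMap.comp_apply] at this
    rw [LinearMap.comp_apply, this, scal_apply, smul_smul, ← map_mul, inv_mul_cancel₀ hj, map_one,
      one_smul]
  refine ⟨T, ?_, ?_, hTf, hXT⟩
  · refine ⟨ModuleCat.of R PUnit, ⟨hTf, ?_, ?_, ?_, ?_⟩, ?_⟩
    · obtain ⟨Q₁, Q₀, _, _, _, _, q, y, hq, hqk⟩ := exists_min_pres hc T
      exact tauRigid_of hq (compare hJ hq hqk hp0 i p hip (h0.add (.of_retract i p hip)))
    · exact (inferInstance : Module.Finite R PUnit)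
    · exact (IsProjective.iff_projective _).1 inferInstance
    · intro l; ext x
      have : x = 0 := Subsingleton.elim (α := PUnit) _ _
      rw [this, map_zero, map_zero]
    · rintro N Q ⟨hfg, hrig, hfgQ, hpQ, hhom⟩
      obtain ⟨iX, pX, hpX⟩ := hXT
      obtain ⟨R₁, R₀, _, _, _, _, r, z, hr, hrs⟩ := tauRigid_elim hrig (prodIso T N)
      have := hr.f0
      have hTN : Module.Finite R (T × N) := Module.Finite.of_surjective z hr.surj
      have hNf : Module.Finite R N := Module.Finite.of_surjective (LinearMap.snd R T N)
        LinearMap.snd_surjective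
      refine ⟨InAdd.mem (max_N hJ hf hk φ hφ h hT iX pX hpX hr hrs), ?_⟩
      let Z : ModCat R := ModuleCat.of R PUnit
      have hQs : ∀ x : Q, (biprod.snd : Z ⊞ Q ⟶ Q).hom ((biprod.inr : Q ⟶ Z ⊞ Q).hom x) = x := by
        intro x
        exact congrArg (fun t : Q ⟶ Q => t.hom x) (biprod.inr_snd (X := Z) (Y := Q))
      have hfgQ' : Module.Finite R (Z ⊞ Q : ModCat R) := hfgQ
      have hQf : Module.Finite R Q := Module.Finite.of_surjective
        (biprod.snd : Z ⊞ Q ⟶ Q).hom (fun x => ⟨_, hQs x⟩)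
      have hpQ' : Module.Projective R (Z ⊞ Q : ModCat R) := (IsProjective.iff_projective _).2 hpQ
      have hQp : Module.Projective R Q := Module.Projective.of_split
        (biprod.inr : Q ⟶ Z ⊞ Q).hom (biprod.snd : Z ⊞ Q ⟶ Q).hom (LinearMap.ext hQs)
      have hQT : ∀ q : Q →ₗ[R] T, ∀ x, q x = 0 := by
        intro q x
        let q' : Q ⟶ T := ModuleCat.ofHom q
        have h1 := hhom (biprod.snd ≫ q' ≫ biprod.inl)
        have h2 : (biprod.inr : Q ⟶ Z ⊞ Q) ≫ (biprod.snd ≫ q' ≫ (biprod.inl : T ⟶ T ⊞ N)) ≫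
          biprod.fst = q' := by simp
        rw [h1] at h2
        have h3 : q' = 0 := by rw [← h2]; simp
        exact congrArg (fun t : Q ⟶ T => t.hom x) h3
      have hsub : Subsingleton Q := by
        apply max_Q hJ hk φ
        intro q
        obtain ⟨ι, _, g1, h1, hh⟩ := hT
        ext x
        have e1 := hh (0, q x)
        have e2 : ∀ j, h1 j (g1 j (0, q x)) = 0 := by
          intro j
          have := hQT ((g1 j).comp ((LinearMap.inr R X (bB f φ)).comp q)) x
          simp only [LinearMap.comp_apply, LinearMap.inr_apply] at this
          rw [this, map_zero]
        rw [Finset.sum_eq_zero (fun j _ => e2 j)] at e1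
        exact (congrArg Prod.snd e1).symm
      exact InAdd.mem ⟨Empty, inferInstance, fun x => x.elim, fun x => x.elim,
        fun x => Subsingleton.elim _ _⟩
  · rintro N C ⟨e⟩
    let E : T ≃ₗ[R] (N × N) × C := e.toLinearEquiv ≪≫ₗ (prodIso (N ⊞ N) C).toLinearEquiv ≪≫ₗ
      LinearEquiv.prodCongr (prodIso N N).toLinearEquiv (LinearEquiv.refl R C)
    let a0 : T →ₗ[R] N × C := LinearMap.prod
      (((LinearMap.fst R N N).comp (LinearMap.fst R (N × N) C)).comp E.toLinearMap)
      ((LinearMap.snd R (N × N) C).comp E.toLinearMap)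
    let a1 : T →ₗ[R] N × C := LinearMap.prod
      (((LinearMap.snd R N N).comp (LinearMap.fst R (N × N) C)).comp E.toLinearMap) 0
    let b0 : N × C →ₗ[R] T := E.symm.toLinearMap.comp
      (LinearMap.prodMap (LinearMap.inl R N N) LinearMap.id)
    let b1 : N × C →ₗ[R] T := E.symm.toLinearMap.comp
      (LinearMap.prodMap (LinearMap.inr R N N) 0)
    have hab : ∀ x, a0 (b0 x) = x := by
      rintro ⟨n, c⟩
      simp [a0, b0]
    have hba : ∀ x, b0 (a0 x) + b1 (a1 x) = x := by
      intro x
      apply E.injective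
      simp [a0, b0, a1, b1]
    have hmem : (ModuleCat.of R (N × C)) ∈ S := by
      refine ⟨hT.trans ⟨Bool, inferInstance, fun b => if b then a0 else a1,
        fun b => if b then b0 else b1, fun x => ?_⟩, i.comp b0, a0.comp p, fun x => ?_⟩
      · simpa using hba x
      · simp [hip, hab]
    have hlt := hmin _ hmem
    have hNf : Module.Finite R N := Module.Finite.of_surjective ((LinearMap.fst R N C).comp a0)
      (fun n => ⟨b0 (n, 0), by rw [LinearMap.comp_apply, hab]; rfl⟩)
    have hCf : Module.Finite R C := Module.Finite.of_surjective ((LinearMap.snd R N C).comp a0)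
      (fun n => ⟨b0 (0, n), by rw [LinearMap.comp_apply, hab]; rfl⟩)
    have lN : Module.length R N ≠ ⊤ := Module.length_ne_top
    have lC : Module.length R C ≠ ⊤ := Module.length_ne_top
    change ¬ (Module.length R (N × C) < Module.length R T) at hlt
    rw [E.length_eq, Module.length_prod, Module.length_prod, Module.length_prod] at hlt
    rw [ModuleCat.isZero_iff_subsingleton, ← Module.length_eq_zero_iff (R := R)]
    revert lC lN hlt
    generalize Module.length R N = a
    generalize Module.length R C = b
    intro ha hb hlt
    lift a to ℕ using ha
    lift b to ℕ using hb
    norm_cast at *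
    omega

end Bongartz3

/-- The combinatorial data of a radical square zero algebra. -/
structure Dat (K R : Type) [Field K] [Ring R] [Algebra K R] (I : Type) where
  e : I → R
  α : I → I → R
  J : Ideal R
  adiag : ∀ a, α a a = e a
  idem : ∀ a, e a * e a = e a
  orth : ∀ a b, a ≠ b → e a * e b = 0
  ne : ∀ a, e a ≠ 0
  al : ∀ b a, e b * α b a = α b a
  ar : ∀ b a, α b a * e a = α b a
  sp : ∀ b a r, ∃ c : K, e b * r * e a = c • α b a
  JJ : ∀ x ∈ J, ∀ r, ∀ y ∈ J, x * r * y = 0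
  aJ : ∀ b a, b ≠ a → α b a ∈ J
  Jdiag : ∀ a, ∀ x ∈ J, e a * x * e a = 0
  Jr : ∀ x ∈ J, ∀ r, x * r ∈ J
  full : (1 : R) ∈ AddSubgroup.closure {x : R | ∃ i r s, x = r * e i * s}

section PP
open Classical TensorProduct
variable {K : Type} [Field K] [Algebra K R] [FiniteDimensional K R] {I : Type} [Fintype I]
  (D : Dat K R I)

theorem Dat.exists_coef (b a : I) : ∃ l : R →ₗ[K] K, (∀ r, D.e b * r * D.e a = l r • D.α b a) ∧
    (D.α b a ≠ 0 → l (D.α b a) = 1) := by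
  by_cases h : D.α b a = 0
  · refine ⟨0, fun r => ?_, fun h' => absurd h h'⟩
    obtain ⟨c, hc⟩ := D.sp b a r
    rw [hc, h]; simp
  obtain ⟨f, hf⟩ := (LinearMap.toSpanSingleton K R (D.α b a)).exists_leftInverse_of_injective
    (LinearMap.ker_toSpanSingleton K h)
  have hf1 : f (D.α b a) = 1 := by
    have := LinearMap.congr_fun hf 1
    simpa using this
  refine ⟨f.comp ((LinearMap.mulRight K (D.e a)).comp (LinearMap.mulLeft K (D.e b))), fun r => ?_, ?_⟩
  · obtain ⟨c, hc⟩ := D.sp b a r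
    simp only [LinearMap.comp_apply, LinearMap.mulRight_apply, LinearMap.mulLeft_apply]
    rw [hc, map_smul, hf1]; simp
  · intro _
    simp only [LinearMap.comp_apply, LinearMap.mulRight_apply, LinearMap.mulLeft_apply]
    rw [D.al, D.ar, hf1]

def Dat.coef (b a : I) : R →ₗ[K] K := 
  if D.α b a = 0 then 0 else (D.exists_coef b a).choose

theorem Dat.coef_spec (b a : I) (r : R) : D.e b * r * D.e a = D.coef b a r • D.α b a := by
  unfold Dat.coef
  have := (D.exists_coef b a).choose_spec.1 r
  split_ifs with h
  · obtain ⟨c, hc⟩ := D.sp b a r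
    rw [hc, h]; simp
  · exact this

theorem Dat.coef_alpha (b a : I) (h : D.α b a ≠ 0) : D.coef b a (D.α b a) = 1 := by
  unfold Dat.coef
  rw [if_neg h]
  exact (D.exists_coef b a).choose_spec.2 h

theorem Dat.coef_eq (b a : I) {r s : R} (h : D.e b * r * D.e a = D.e b * s * D.e a) :
    D.coef b a r = D.coef b a s := by
  by_cases h0 : D.α b a = 0
  · unfold Dat.coef; rw [if_pos h0]; rfl
  rw [D.coef_spec, D.coef_spec, ← sub_eq_zero, ← sub_smul, smul_eq_zero, sub_eq_zero] at h
  exact h.resolve_right h0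

theorem Dat.coef_J (a : I) {x : R} (h : x ∈ D.J) : D.coef a a x = 0 := by
  rw [D.coef_eq a a (s := 0) (by rw [D.Jdiag a x h]; simp), map_zero]

/-- the projective left ideal -/
def Dat.re (a : I) : Submodule R R := Submodule.span R {D.e a}

theorem Dat.re_mul {a : I} (r : D.re a) : (r : R) * D.e a = r := by
  obtain ⟨s, hs⟩ := Submodule.mem_span_singleton.1 r.2
  rw [← hs, smul_eq_mul, mul_assoc, D.idem]

def Dat.gen (a : I) : D.re a := ⟨D.e a, Submodule.mem_span_singleton_self _⟩

theorem Dat.re_eq {a : I} (r : D.re a) : r = (r : R) • D.gen a :=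
  Subtype.ext (D.re_mul r).symm

instance (a : I) : Module.Projective R (D.re a) := by
  refine Module.Projective.of_split (D.re a).subtype (LinearMap.toSpanSingleton R _ (D.gen a)) ?_
  ext r
  exact D.re_mul r

instance (a : I) : Module.Finite K (D.re a) :=
  Module.Finite.of_injective ((D.re a).subtype.restrictScalars K) Subtype.val_injective

variable (V : I → Type) [∀ i, AddCommGroup (V i)] [∀ i, Module K (V i)]
  [∀ i, FiniteDimensional K (V i)]

/-- projective module with prescribed top -/
def PP : Type := ∀ i, D.re i ⊗[K] V i

instance : AddCommGroup (PP D V) := inferInstanceAs (AddCommGroup (∀ i, D.re i ⊗[K] V i))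
instance : Module R (PP D V) := inferInstanceAs (Module R (∀ i, D.re i ⊗[K] V i))
instance : Module K (PP D V) := inferInstanceAs (Module K (∀ i, D.re i ⊗[K] V i))
instance : IsScalarTower K R (PP D V) := inferInstanceAs (IsScalarTower K R (∀ i, D.re i ⊗[K] V i))
instance : Module.Finite K (PP D V) := inferInstanceAs (Module.Finite K (∀ i, D.re i ⊗[K] V i))
instance : Module.Finite R (PP D V) := Module.Finite.of_restrictScalars_finite K R _
instance : Module.Projective R (PP D V) :=
  Module.Projective.of_equiv (DFinsupp.linearEquivFunOnFintype (R := R)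
    (M := fun i => D.re i ⊗[K] V i))

variable {V}
def eta (a : I) : V a →ₗ[K] PP D V :=
  (LinearMap.single K (fun i => D.re i ⊗[K] V i) a).comp (TensorProduct.mk K (D.re a) (V a) (D.gen a))

theorem eta_eq (a : I) (v : V a) (r : R) :
    r • eta D a v = (Pi.single a ((r • D.gen a) ⊗ₜ[K] v) : ∀ i, D.re i ⊗[K] V i) := by
  change r • (Pi.single a (D.gen a ⊗ₜ[K] v) : ∀ i, D.re i ⊗[K] V i) = _
  rw [← Pi.single_smul]
  rfl

theorem PP_ind {p : PP D V → Prop} (h0 : p 0) (hadd : ∀ x y, p x → p y → p (x + y))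
    (hs : ∀ (r : R) (a : I) (v : V a), p (r • eta D a v)) (x : PP D V) : p x := by
  have h1 : ∀ a (t : D.re a ⊗[K] V a), p (Pi.single a t : ∀ i, D.re i ⊗[K] V i) := by
    intro a t
    induction t using TensorProduct.induction_on with
    | zero => rw [Pi.single_zero]; exact h0
    | tmul r v => rw [D.re_eq r, ← eta_eq]; exact hs _ _ _
    | add s t hs ht => rw [Pi.single_add]; exact hadd _ _ hs ht
  have h2 : x = ∑ a, (Pi.single a (x a) : ∀ i, D.re i ⊗[K] V i) := (Finset.univ_sum_single x).symm
  rw [h2]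
  exact Finset.sum_induction _ p hadd h0 (fun a _ => h1 a _)

theorem e_eta (a : I) (v : V a) : D.e a • eta D a v = eta D a v := by
  rw [eta_eq]
  have : D.e a • D.gen a = D.gen a := Subtype.ext (D.idem a)
  rw [this]; rfl

def theta (b a : I) : PP D V →ₗ[K] V a :=
  (TensorProduct.lift (LinearMap.toSpanSingleton K _ LinearMap.id ∘ₗ (D.coef b a) ∘ₗ
    ((D.re a).subtype.restrictScalars K))).comp
  (LinearMap.proj (R := K) (φ := fun i => D.re i ⊗[K] V i) a)

theorem theta_eta (b a : I) (r : R) (v : V a) : theta D b a (r • eta D a v) = D.coef b a r • v := by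
  rw [eta_eq]
  change (TensorProduct.lift _) ((Pi.single a ((r • D.gen a) ⊗ₜ[K] v) : ∀ i, D.re i ⊗[K] V i) a) = _
  rw [Pi.single_eq_same, TensorProduct.lift.tmul]
  change D.coef b a (r * D.e a) • v = _
  rw [D.coef_eq b a (s := r)]
  rw [mul_assoc, mul_assoc, D.idem, mul_assoc]

theorem theta_eta_ne (b a a' : I) (h : a' ≠ a) (r : R) (v : V a') :
    theta D b a (r • eta D a' v) = 0 := by
  rw [eta_eq]
  change (TensorProduct.lift _) ((Pi.single a' ((r • D.gen a') ⊗ₜ[K] v) :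
    ∀ i, D.re i ⊗[K] V i) a) = _
  rw [Pi.single_eq_of_ne h.symm, map_zero]

theorem theta_alpha (b a : I) (h : D.α b a ≠ 0) (v : V a) :
    theta D b a (D.α b a • eta D a v) = v := by
  rw [theta_eta, D.coef_alpha b a h, one_smul]

theorem e_smul (b : I) (x : PP D V) : D.e b • x = ∑ a, D.α b a • eta D a (theta D b a x) := by
  refine PP_ind D (p := fun x => D.e b • x = ∑ a, D.α b a • eta D a (theta D b a x)) ?_ ?_ ?_ x
  · simp
  · intro x y hx hy
    rw [smul_add, hx, hy, ← Finset.sum_add_distrib]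
    simp only [map_add, smul_add]
  · intro r a v
    rw [Finset.sum_eq_single a]
    · rw [theta_eta, map_smul, smul_comm (D.α b a) (D.coef b a r) (eta D a v),
        ← smul_assoc (D.coef b a r), ← D.coef_spec, mul_smul, mul_smul, e_eta]
    · intro a' _ h
      rw [theta_eta_ne D b a' a h.symm, map_zero, smul_zero]
    · simp

theorem theta_jt (a : I) {x : PP D V} (hx : x ∈ jt D.J (PP D V)) : theta D a a x = 0 := by
  have h1 : ∀ j ∈ D.J, ∀ m : PP D V, theta D a a (j • m) = 0 := by
    intro j hj m
    refine PP_ind D (p := fun m => theta D a a (j • m) = 0) ?_ ?_ ?_ m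
    · simp
    · intro x y hx hy; rw [smul_add, map_add, hx, hy, add_zero]
    · intro r a' v
      rw [← mul_smul]
      by_cases h : a' = a
      · subst h; rw [theta_eta, D.coef_J _ (D.Jr j hj r), zero_smul]
      · rw [theta_eta_ne D a a a' h]
  have h2 : ∀ r : R, theta D a a (r • x) = 0 := by
    refine Submodule.span_induction (p := fun x _ => ∀ r : R, theta D a a (r • x) = 0) ?_ ?_ ?_ ?_ hx
    · rintro _ ⟨j, hj, m, rfl⟩ r
      rw [smul_smul]; exact h1 _ (D.J.mul_mem_left r hj) m
    · intro r; simp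
    · intro x y _ _ hx hy r; rw [smul_add, map_add, hx, hy, add_zero]
    · intro s x _ hx r; rw [smul_smul]; exact hx _
  simpa using h2 1

section lift
variable {M : Type} [AddCommGroup M] [Module R M] [Module K M] [IsScalarTower K R M]

def PPlift (h : ∀ a, V a →ₗ[K] M) : PP D V →ₗ[R] M :=
  LinearMap.lsum R (fun i => D.re i ⊗[K] V i) ℕ fun a =>
    TensorProduct.AlgebraTensorModule.lift
      ((LinearMap.toSpanSingleton R (V a →ₗ[K] M) (h a)).comp (D.re a).subtype)

theorem PPlift_eta (h : ∀ a, V a →ₗ[K] M) (a : I) (v : V a) :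
    PPlift D h (eta D a v) = D.e a • h a v := by
  have := LinearMap.lsum_piSingle R (fun i => D.re i ⊗[K] V i) ℕ (fun a =>
    TensorProduct.AlgebraTensorModule.lift
      ((LinearMap.toSpanSingleton R (V a →ₗ[K] M) (h a)).comp (D.re a).subtype)) a
      (D.gen a ⊗ₜ[K] v)
  refine this.trans ?_
  rw [TensorProduct.AlgebraTensorModule.lift_tmul]
  rfl

theorem PP_ext {f g : PP D V →ₗ[R] M} (h : ∀ a v, f (eta D a v) = g (eta D a v)) : f = g := by
  ext x
  refine PP_ind D (p := fun x => f x = g x) ?_ ?_ ?_ x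
  · simp
  · intro x y hx hy; rw [map_add, map_add, hx, hy]
  · intro r a v; rw [map_smul, map_smul, h]
end lift

/-- fullness lemma -/
theorem Dat.le_of {M : Type} [AddCommGroup M] [Module R M] (N L : Submodule R M)
    (h : ∀ n ∈ N, ∀ i, D.e i • n ∈ L) : N ≤ L := by
  intro n hn
  have : ∀ r ∈ AddSubgroup.closure {x : R | ∃ i r s, x = r * D.e i * s}, r • n ∈ L := by
    intro r hr
    refine AddSubgroup.closure_induction (p := fun r _ => r • n ∈ L) ?_ ?_ ?_ ?_ hr
    · rintro _ ⟨i, r, s, rfl⟩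
      rw [mul_smul, mul_smul]
      exact L.smul_mem _ (h _ (N.smul_mem _ hn) i)
    · simp
    · intro x y _ _ hx hy; rw [add_smul]; exact L.add_mem hx hy
    · intro x _ hx; rw [neg_smul]; exact L.neg_mem hx
  simpa using this 1 D.full

end PP

section GG
open Classical
variable {K : Type} [Field K] [Algebra K R] [FiniteDimensional K R] {I : Type} [Fintype I]
  (D : Dat K R I)

def Dat.E (b a : I) : Prop := b ≠ a ∧ D.α b a ≠ 0

section
variable {V : I → Type} [∀ i, AddCommGroup (V i)] [∀ i, Module K (V i)]
  [∀ i, FiniteDimensional K (V i)]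

def alphaEta (b a : I) : V a →ₗ[K] PP D V :=
  (DistribSMul.toLinearMap K (PP D V) (D.α b a)).comp (eta D a)

theorem alphaEta_apply (b a : I) (v : V a) : alphaEta D b a v = D.α b a • eta D a v := rfl

theorem e_smul' (b : I) (x : PP D V) :
    ∃ z ∈ jt D.J (PP D V), D.e b • x = eta D b (theta D b b x) + z := by
  refine ⟨∑ a ∈ Finset.univ.erase b, D.α b a • eta D a (theta D b a x), ?_, ?_⟩
  · refine Submodule.sum_mem _ fun a ha => jt_mem (D.aJ b a ?_) _
    exact (Finset.ne_of_mem_erase ha).symm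
  · rw [e_smul, ← Finset.add_sum_erase _ _ (Finset.mem_univ b), D.adiag, e_eta]

theorem theta_self (a : I) (v : V a) : theta D a a (eta D a v) = v := by
  have := theta_alpha D a a (by rw [D.adiag]; exact D.ne a) v
  rwa [D.adiag, e_eta] at this
end

section
variable {V : I → Type} [∀ i, AddCommGroup (V i)] [∀ i, Module K (V i)]
  [∀ i, FiniteDimensional K (V i)]
  {W : I → Type} [∀ i, AddCommGroup (W i)] [∀ i, Module K (W i)]
  [∀ i, FiniteDimensional K (W i)]

def PPmap (g : ∀ a, V a →ₗ[K] W a) : PP D V →ₗ[R] PP D W :=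
  PPlift D fun a => (eta D a).comp (g a)

theorem PPmap_eta (g : ∀ a, V a →ₗ[K] W a) (a : I) (v : V a) :
    PPmap D g (eta D a v) = eta D a (g a v) := by
  unfold PPmap
  rw [PPlift_eta, LinearMap.comp_apply, e_eta]
end

variable {D}

def phi' (U : QRep K D.E) (b a : I) : U.X b →ₗ[K] U.Y a :=
  if h : D.E b a then U.φ b a h else 0

theorem phi'_pos (U : QRep K D.E) {b a : I} (h : D.E b a) : phi' U b a = U.φ b a h := dif_pos h
theorem phi'_neg (U : QRep K D.E) {b a : I} (h : ¬ D.E b a) : phi' U b a = 0 := dif_neg h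

/-- the presentation attached to a representation -/
def ff (U : QRep K D.E) : PP D U.X →ₗ[R] PP D U.Y :=
  PPlift D fun b => ∑ a, (alphaEta D b a).comp (phi' U b a)

theorem ff_eta (U : QRep K D.E) (b : I) (u : U.X b) :
    ff U (eta D b u) = ∑ a, D.α b a • eta D a (phi' U b a u) := by
  unfold ff
  rw [PPlift_eta, LinearMap.sum_apply, Finset.smul_sum]
  refine Finset.sum_congr rfl fun a _ => ?_
  rw [LinearMap.comp_apply, alphaEta_apply, smul_smul, D.al]

theorem theta_sum {V : I → Type} [∀ i, AddCommGroup (V i)] [∀ i, Module K (V i)]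
    [∀ i, FiniteDimensional K (V i)] (b a : I) (h : D.α b a ≠ 0) (w : ∀ a, V a) :
    theta D b a (∑ a', D.α b a' • eta D a' (w a')) = w a := by
  rw [map_sum, Finset.sum_eq_single a, theta_alpha D b a h]
  · intro a' _ h
    rw [theta_eta_ne D b a a' h]
  · simp

theorem theta_ff (U : QRep K D.E) (b a : I) (h : D.E b a) (u : U.X b) :
    theta D b a (ff U (eta D b u)) = U.φ b a h u := by
  rw [ff_eta, theta_sum b a h.2 (fun a => phi' U b a u), phi'_pos U h]

theorem ff_jt (U : QRep K D.E) (x : PP D U.X) : ff U x ∈ jt D.J (PP D U.Y) := by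
  refine PP_ind D (p := fun x => ff U x ∈ jt D.J (PP D U.Y)) ?_ ?_ ?_ x
  · rw [map_zero]; exact Submodule.zero_mem _
  · intro x y hx hy; rw [map_add]; exact Submodule.add_mem _ hx hy
  · intro r b u
    rw [map_smul, ff_eta]
    refine Submodule.smul_mem _ _ (Submodule.sum_mem _ fun a _ => ?_)
    by_cases h : b = a
    · rw [phi'_neg U (fun h' => h'.1 h)]; simp
    · exact jt_mem (D.aJ b a h) _

theorem ff_kill (U : QRep K D.E) {x : PP D U.X} (hx : x ∈ jt D.J (PP D U.X)) : ff U x = 0 :=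
  jt_kill hx _ fun _ hj m => jt_smul D.JJ hj (ff_jt U m)

theorem e_ff (U : QRep K D.E) (b : I) (x : PP D U.X) :
    D.e b • ff U x = ff U (eta D b (theta D b b x)) := by
  obtain ⟨z, hz, h⟩ := e_smul' D b x
  rw [← map_smul, h, map_add, ff_kill U hz, add_zero]

theorem ff_ker (U : QRep K D.E) (hU : U.Inj) : LinearMap.ker (ff U) ≤ jt D.J (PP D U.X) := by
  refine D.le_of _ _ fun x hx b => ?_
  obtain ⟨z, hz, h⟩ := e_smul' D b x
  have h1 := e_ff U b x
  rw [LinearMap.mem_ker.1 hx, smul_zero] at h1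
  have h2 : theta D b b x = 0 := by
    apply hU b
    funext a
    rw [map_zero, QRep.inj_apply, ← theta_ff U b a a.2, ← h1, map_zero]
    rfl
  rw [h, h2, map_zero, zero_add]
  exact hz

/-- the module attached to a representation -/
abbrev G (U : QRep K D.E) : Type := PP D U.Y ⧸ LinearMap.range (ff U)

abbrev gq (U : QRep K D.E) : PP D U.Y →ₗ[R] G U := (LinearMap.range (ff U)).mkQ

theorem gq_ff (U : QRep K D.E) (x : PP D U.X) : gq U (ff U x) = 0 := by
  rw [Submodule.mkQ_apply, Submodule.Quotient.mk_eq_zero]; exact ⟨x, rfl⟩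

theorem gq_surj (U : QRep K D.E) : Function.Surjective (gq U) := Submodule.mkQ_surjective _

theorem gq_zero (U : QRep K D.E) {y} (h : gq U y = 0) : ∃ x, ff U x = y := by
  rw [Submodule.mkQ_apply, Submodule.Quotient.mk_eq_zero] at h; exact h

theorem G_pres (U : QRep K D.E) : Pres (ff U) (gq U) where
  p1 := inferInstance
  p0 := inferInstance
  f1 := inferInstance
  f0 := inferInstance
  surj := gq_surj U
  exact := fun y => ⟨fun h => gq_zero U h, by rintro ⟨x, rfl⟩; exact gq_ff U x⟩

theorem G_ext {U : QRep K D.E} {M : Type} [AddCommGroup M] [Module R M] [Module K M]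
    [IsScalarTower K R M] {F F' : G U →ₗ[R] M}
    (h : ∀ a v, F (gq U (eta D a v)) = F' (gq U (eta D a v))) : F = F' := by
  have : F.comp (gq U) = F'.comp (gq U) := PP_ext D h
  refine LinearMap.ext fun x => ?_
  obtain ⟨y, rfl⟩ := gq_surj U x
  exact LinearMap.congr_fun this y

theorem PPmap_ff {U U' : QRep K D.E} (g : QHom U U') (x : PP D U.X) :
    PPmap D g.y (ff U x) = ff U' (PPmap D g.x x) := by
  have : (PPmap D g.y).comp (ff U) = (ff U').comp (PPmap D g.x) := by
    refine PP_ext D fun b u => ?_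
    rw [LinearMap.comp_apply, LinearMap.comp_apply, ff_eta, PPmap_eta, ff_eta, map_sum]
    refine Finset.sum_congr rfl fun a _ => ?_
    rw [map_smul, PPmap_eta]
    by_cases h : D.E b a
    · rw [phi'_pos U h, phi'_pos U' h, g.comm]
    · rw [phi'_neg U h, phi'_neg U' h]; simp
  exact LinearMap.congr_fun this x

def Gmap {U U' : QRep K D.E} (g : QHom U U') : G U →ₗ[R] G U' :=
  Submodule.mapQ _ _ (PPmap D g.y) (by
    rintro _ ⟨x, rfl⟩
    exact ⟨_, (PPmap_ff g x).symm⟩)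

theorem Gmap_eta {U U' : QRep K D.E} (g : QHom U U') (a : I) (v : U.Y a) :
    Gmap g (gq U (eta D a v)) = gq U' (eta D a (g.y a v)) := by
  unfold Gmap
  rw [← PPmap_eta]; rfl

theorem Gmap_id (U : QRep K D.E) : Gmap (QHom.id U) = LinearMap.id :=
  G_ext fun a v => by rw [Gmap_eta]; rfl

theorem Gmap_comp {U U' U'' : QRep K D.E} (g : QHom U' U'') (g' : QHom U U') :
    Gmap (g.comp g') = (Gmap g).comp (Gmap g') :=
  G_ext fun a v => by rw [Gmap_eta, LinearMap.comp_apply, Gmap_eta, Gmap_eta]; rfl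

theorem G_sub {U : QRep K D.E} (h : Subsingleton (G U)) (a : I) : Subsingleton (U.Y a) := by
  refine subsingleton_of_forall_eq 0 fun v => ?_
  obtain ⟨x, hx⟩ := gq_zero U (Subsingleton.elim (gq U (eta D a v)) 0)
  rw [← theta_self D a v, ← hx, theta_jt D a (ff_jt U x)]

theorem Gmap_zero_y {U U' : QRep K D.E} (g : QHom U U') (h : ∀ a v, g.y a v = 0) :
    Gmap g = 0 :=
  G_ext fun a v => by rw [Gmap_eta, h]; simp

theorem exists_cover {M : Type} [AddCommGroup M] [Module R M] [Module K M] [IsScalarTower K R M]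
    [Module.Finite K M] : ∃ (V : I → Type) (_ : ∀ i, AddCommGroup (V i)) (_ : ∀ i, Module K (V i))
      (_ : ∀ i, FiniteDimensional K (V i)) (q : PP D V →ₗ[R] M), Function.Surjective q ∧
        LinearMap.ker q ≤ jt D.J (PP D V) := by
  let eM (a : I) : Submodule K M := LinearMap.range (DistribSMul.toLinearMap K M (D.e a))
  let W (a : I) : Submodule K (eM a) := ((jt D.J M).restrictScalars K).comap (eM a).subtype
  choose V hV using fun a => Submodule.exists_isCompl (W a)
  let h (a : I) : V a →ₗ[K] M := (eM a).subtype.comp (V a).subtype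
  let q := PPlift D h
  have hq (a : I) (v : V a) : q (eta D a v) = ((v : eM a) : M) := by
    change PPlift D h (eta D a v) = _
    rw [PPlift_eta]
    change D.e a • ((v : eM a) : M) = _
    obtain ⟨m, hm⟩ := (v : eM a).2
    rw [← hm]
    change D.e a • D.e a • m = D.e a • m
    rw [smul_smul, D.idem]
  refine ⟨fun a => V a, inferInstance, inferInstance, inferInstance, q, ?_, ?_⟩
  · have h1 : (⊤ : Submodule R M) ≤ LinearMap.range q ⊔ jt D.J M := by
      refine D.le_of _ _ fun m _ i => ?_
      have h2 : (⟨D.e i • m, m, rfl⟩ : eM i) ∈ W i ⊔ V i := by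
        rw [(hV i).sup_eq_top]; trivial
      obtain ⟨w, hw, v, hv, hwv⟩ := Submodule.mem_sup.1 h2
      have h3 : (w : M) + (v : M) = D.e i • m := congrArg Subtype.val hwv
      rw [← h3, add_comm]
      refine Submodule.add_mem_sup ⟨eta D i ⟨v, hv⟩, hq i ⟨v, hv⟩⟩ hw
    have h2 : jt D.J M ≤ LinearMap.range q := by
      refine Submodule.span_le.2 ?_
      rintro _ ⟨j, hj, m, rfl⟩
      obtain ⟨y, ⟨x, rfl⟩, z, hz, rfl⟩ := Submodule.mem_sup.1 (h1 (x := m) trivial)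
      rw [smul_add, jt_smul D.JJ hj hz, add_zero, ← map_smul]
      exact ⟨_, rfl⟩
    rw [sup_eq_left.2 h2] at h1
    exact LinearMap.range_eq_top.1 (top_le_iff.1 h1)
  · refine D.le_of _ _ fun x hx b => ?_
    obtain ⟨z, hz, h1⟩ := e_smul' D b x
    have h2 : q (D.e b • x) = 0 := by rw [map_smul, LinearMap.mem_ker.1 hx, smul_zero]
    rw [h1, map_add, hq] at h2
    have h3 : ((theta D b b x : V b) : eM b) ∈ W b := by
      change (((theta D b b x : V b) : eM b) : M) ∈ jt D.J M
      rw [eq_neg_of_add_eq_zero_left h2]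
      exact Submodule.neg_mem _ (jt_map q hz)
    have h4 : ((theta D b b x : V b) : eM b) = 0 :=
      (Submodule.disjoint_def.1 (hV b).disjoint) _ h3 (theta D b b x : V b).2
    have h5 : (theta D b b x : V b) = 0 := Subtype.ext h4
    rw [h1, h5, map_zero, zero_add]
    exact hz

theorem G_dense {M : Type} [AddCommGroup M] [Module R M] [Module K M] [IsScalarTower K R M]
    [Module.Finite K M] : ∃ U : QRep K D.E, Nonempty (G U ≃ₗ[R] M) := by
  obtain ⟨V, _, _, _, q, hq, hk⟩ := exists_cover (D := D) (M := M)
  let N := LinearMap.ker q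
  let X (b : I) : Submodule K (PP D V) := N.restrictScalars K ⊓
    LinearMap.ker (DistribSMul.toLinearMap K (PP D V) (D.e b) - LinearMap.id)
  have hX (b : I) (n : X b) : D.e b • (n : PP D V) = n := by
    have := n.2.2
    exact sub_eq_zero.1 this
  let U : QRep K D.E :=
    { X := fun b => X b
      Y := V
      xg := inferInstance
      yg := inferInstance
      xm := inferInstance
      ym := inferInstance
      xf := inferInstance
      yf := inferInstance
      φ := fun b a _ => (theta D b a).comp (X b).subtype }
  have hf (b : I) (n : X b) : ff U (eta D b n) = (n : PP D V) := by
    have h0 : (n : PP D V) = ∑ a, D.α b a • eta D a (theta D b a (n : PP D V)) := by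
      rw [← e_smul, hX b n]
    rw [ff_eta]
    refine Eq.trans ?_ h0.symm
    refine Finset.sum_congr rfl fun a _ => ?_
    by_cases h : D.E b a
    · rw [phi'_pos U h]; rfl
    · rw [phi'_neg U h]
      by_cases h0 : D.α b a = 0
      · rw [h0]; simp
      · have : b = a := by
          by_contra h'
          exact h ⟨h', h0⟩
        subst this
        rw [theta_jt D b (hk n.2.1)]; simp
  have hr : LinearMap.range (ff U) = N := by
    apply le_antisymm
    · rintro _ ⟨x, rfl⟩
      refine PP_ind D (p := fun x => ff U x ∈ N) ?_ ?_ ?_ x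
      · rw [map_zero]; exact N.zero_mem
      · intro x y hx hy; rw [map_add]; exact N.add_mem hx hy
      · intro r b n
        rw [map_smul, hf b n]
        exact N.smul_mem _ n.2.1
    · refine D.le_of _ _ fun n hn b => ?_
      refine ⟨eta D b ⟨D.e b • n, N.smul_mem _ hn, ?_⟩, hf b _⟩
      change D.e b • D.e b • n - D.e b • n = 0
      rw [smul_smul, D.idem, sub_self]
  exact ⟨U, ⟨(Submodule.quotEquivOfEq _ _ hr).trans (q.quotKerEquivOfSurjective hq)⟩⟩

theorem G_homSurj (U : QRep K D.E) (hU : Rigid U) (c : I → Bool) (s : Bool) (hs : Supp c s U) :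
    HomSurj (ff U) (G U) := by
  intro h
  obtain ⟨l, hl⟩ := lift_surj (gq U) (gq_surj U) h
  obtain ⟨u, v, huv⟩ := hU fun b a _ => (theta D b a).comp
    ((l.restrictScalars K).comp (eta D b))
  refine ⟨(gq U).comp (PPmap D v), fun x => ?_⟩
  have : ((gq U).comp (PPmap D v)).comp (ff U) = h := by
    refine PP_ext D fun b z => ?_
    rw [← hl]
    have h1 : l (eta D b z) = ff U (eta D b (u b z)) + PPmap D v (ff U (eta D b z)) := by
      conv_lhs => rw [← e_eta, map_smul, e_smul]
      rw [ff_eta, ff_eta, map_sum, ← Finset.sum_add_distrib]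
      refine Finset.sum_congr rfl fun a _ => ?_
      rw [map_smul, PPmap_eta, ← smul_add, ← map_add]
      by_cases h0 : D.α b a = 0
      · rw [h0]; simp
      congr 2
      by_cases h : D.E b a
      · have := huv b a h z
        rw [phi'_pos U h, ← this]; rfl
      · have : b = a := by
          by_contra h'
          exact h ⟨h', h0⟩
        subst this
        by_cases hc : c b = s
        · exact (hs.2 b hc).elim _ _
        · rw [(hs.1 b hc).elim z 0]; simp
    rw [h1, map_add, gq_ff, zero_add]; rfl
  exact LinearMap.congr_fun this x

theorem G_full (U U' : QRep K D.E) (c : I → Bool) (s : Bool) (hs : Supp c s U)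
    (hs' : Supp c s U') (hc : ∀ b a, D.E b a → c b ≠ c a) (F : G U →ₗ[R] G U') :
    ∃ g : QHom U U', F = Gmap g := by
  obtain ⟨l, hl⟩ := lift_surj (gq U') (gq_surj U') (F.comp (gq U))
  let g (a : I) : U.Y a →ₗ[K] U'.Y a := (theta D a a).comp ((l.restrictScalars K).comp (eta D a))
  have hg : l = PPmap D g := by
    refine PP_ext D fun a v => ?_
    rw [PPmap_eta]
    conv_lhs => rw [← e_eta, map_smul, e_smul]
    rw [Finset.sum_eq_single a]
    · rw [D.adiag, e_eta]; rfl
    · intro a' _ hne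
      by_cases h0 : D.α a a' = 0
      · rw [h0, zero_smul]
      have hE : D.E a a' := ⟨hne.symm, h0⟩
      by_cases h : c a = s
      · rw [(hs.2 a h).elim v 0]; simp
      · have h' : c a' = s := by
          have := hc a a' hE
          revert h this; cases c a <;> cases c a' <;> cases s <;> simp
        rw [(hs'.2 a' h').elim (theta D a a' _) 0]; simp
    · simp
  have hx (b : I) : ∃ x : U.X b →ₗ[K] U'.X b, ∀ u, U'.inj b (x u) =
      (LinearMap.pi fun a : {a // D.E b a} => (g a).comp (U.φ b a a.2)) u := by
    refine lift_range (R := K) _ _ fun u => ?_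
    have h1 : gq U' (l (ff U (eta D b u))) = 0 := by
      rw [hl, LinearMap.comp_apply, gq_ff, map_zero]
    obtain ⟨x, hx⟩ := gq_zero U' h1
    refine ⟨theta D b b x, ?_⟩
    funext a
    rw [QRep.inj_apply, ← theta_ff U' b a a.2, ← e_ff, hx, ← map_smul, ← map_smul, e_eta, hg,
      ff_eta, map_sum]
    simp_rw [map_smul, PPmap_eta]
    rw [theta_sum b a a.2.2 (fun a => g a (phi' U b a u)), phi'_pos U a.2]
    rfl
  choose x hx using hx
  refine ⟨⟨x, g, fun b a h u => ?_⟩, ?_⟩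
  · exact (congrFun (hx b u) ⟨a, h⟩).symm
  · refine G_ext fun a v => ?_
    rw [Gmap_eta, ← LinearMap.comp_apply, ← hl, hg, PPmap_eta]

end GG

section Core
open Classical
variable {K : Type} [Field K] [Algebra K R] [FiniteDimensional K R] {I : Type} [Fintype I]

theorem indec_idem {M : ModCat R} (hM : IsIndecMod M) (p : M →ₗ[R] M) (hp : ∀ x, p (p x) = p x) :
    (∀ x, p x = 0) ∨ ∀ x, p x = x := by
  let A : ModCat R := ModuleCat.of R (LinearMap.ker p)
  let B : ModCat R := ModuleCat.of R (LinearMap.range p)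
  let e : M ≃ₗ[R] (LinearMap.ker p × LinearMap.range p) :=
    { toFun := fun x => (⟨x - p x, by simp [hp]⟩, ⟨p x, x, rfl⟩)
      map_add' := fun x y => by
        ext
        · simp; abel
        · simp
      map_smul' := fun r x => by
        ext
        · simp [smul_sub]
        · simp
      invFun := fun z => (z.1 : M) + z.2
      left_inv := fun x => by simp
      right_inv := by
        rintro ⟨⟨x, hx⟩, ⟨_, y, rfl⟩⟩
        have hx' : p x = 0 := hx
        ext
        · simp [hp, hx']
        · simp [hp, hx'] }
  have hiso : M ≅ A ⊞ B := (e.toModuleIso : M ≅ ModuleCat.of R (A × B)) ≪≫ (prodIso A B).symm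
  rcases hM.2 A B ⟨hiso⟩ with h | h
  · right
    have := ModuleCat.isZero_iff_subsingleton.1 h
    intro x
    have h1 : (e x).1 = 0 := Subsingleton.elim (α := A) _ _
    have h2 : x - p x = 0 := congrArg Subtype.val h1
    exact (sub_eq_zero.1 h2).symm
  · left
    have := ModuleCat.isZero_iff_subsingleton.1 h
    intro x
    have h1 : (e x).2 = 0 := Subsingleton.elim (α := B) _ _
    exact congrArg Subtype.val h1

variable {D : Dat K R I}

def tdim {E : I → I → Prop} (U : QRep K E) : ℕ :=
  ∑ a, Module.finrank K (U.X a) + ∑ a, Module.finrank K (U.Y a)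

theorem split_idem {E : I → I → Prop} (U : QRep K E) (g : QHom U U) (hg : g.comp g = g) :
    ∃ (U1 : QRep K E) (i : QHom U1 U) (p : QHom U U1), i.comp p = g ∧ p.comp i = QHom.id U1 ∧
      (tdim U ≤ tdim U1 → g = QHom.id U) := by
  have hx (a : I) (u : U.X a) : g.x a (g.x a u) = g.x a u :=
    congrArg (fun k : QHom U U => k.x a u) hg
  have hy (a : I) (u : U.Y a) : g.y a (g.y a u) = g.y a u :=
    congrArg (fun k : QHom U U => k.y a u) hg
  let U1 : QRep K E :=
    { X := fun a => LinearMap.range (g.x a)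
      Y := fun a => LinearMap.range (g.y a)
      xg := inferInstance
      yg := inferInstance
      xm := inferInstance
      ym := inferInstance
      xf := inferInstance
      yf := inferInstance
      φ := fun a b h => ((U.φ a b h).comp (LinearMap.range (g.x a)).subtype).codRestrict _ (by
        rintro ⟨_, u, rfl⟩
        exact ⟨_, g.comm a b h u⟩) }
  refine ⟨U1, ⟨fun a => (LinearMap.range (g.x a)).subtype, fun a => (LinearMap.range (g.y a)).subtype,
    fun _ _ _ _ => rfl⟩, ⟨fun a => (g.x a).rangeRestrict, fun a => (g.y a).rangeRestrict,
    fun a b h u => Subtype.ext (g.comm a b h u)⟩, rfl, ?_, ?_⟩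
  · refine QHom.ext' ?_ ?_
    · rintro a ⟨_, u, rfl⟩; exact Subtype.ext (hx a u)
    · rintro a ⟨_, u, rfl⟩; exact Subtype.ext (hy a u)
  · intro hd
    have lx (a : I) : Module.finrank K (U1.X a) ≤ Module.finrank K (U.X a) :=
      Submodule.finrank_le (LinearMap.range (g.x a))
    have ly (a : I) : Module.finrank K (U1.Y a) ≤ Module.finrank K (U.Y a) :=
      Submodule.finrank_le (LinearMap.range (g.y a))
    have sx := Finset.sum_le_sum (fun a (_ : a ∈ Finset.univ) => lx a)
    have sy := Finset.sum_le_sum (fun a (_ : a ∈ Finset.univ) => ly a)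
    unfold tdim at hd
    have ex := (Finset.sum_eq_sum_iff_of_le (fun a (_ : a ∈ Finset.univ) => lx a)).1 (by omega)
    have ey := (Finset.sum_eq_sum_iff_of_le (fun a (_ : a ∈ Finset.univ) => ly a)).1 (by omega)
    refine QHom.ext' (fun a u => ?_) fun a u => ?_
    · have h1 : LinearMap.range (g.x a) = ⊤ := Submodule.eq_top_of_finrank_eq (ex a (Finset.mem_univ a))
      obtain ⟨w, rfl⟩ : u ∈ LinearMap.range (g.x a) := by rw [h1]; trivial
      exact hx a w
    · have h1 : LinearMap.range (g.y a) = ⊤ := Submodule.eq_top_of_finrank_eq (ey a (Finset.mem_univ a))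
      obtain ⟨w, rfl⟩ : u ∈ LinearMap.range (g.y a) := by rw [h1]; trivial
      exact hy a w

theorem G_zero {U : QRep K D.E} (h : ∀ a, Subsingleton (U.Y a)) : Subsingleton (G U) := by
  have h1 : (LinearMap.id : G U →ₗ[R] G U) = 0 := G_ext fun a v => by
    rw [(h a).elim v 0]; simp
  exact subsingleton_of_forall_eq 0 fun x => LinearMap.congr_fun h1 x

theorem G_iso {U U' : QRep K D.E} (h : QIso U U') : Nonempty (G U ≃ₗ[R] G U') := by
  obtain ⟨f, g, h1, h2⟩ := h
  refine ⟨LinearEquiv.ofLinearMap (Gmap f) (Gmap g) ?_ ?_⟩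
  · rw [← Gmap_comp, h2, Gmap_id]
  · rw [← Gmap_comp, h1, Gmap_id]

theorem indec_G {M : ModCat R} (hf : IsFGMod M) (hM : IsIndecMod M) :
    ∃ U : QRep K D.E, Ind U ∧ Nonempty (G U ≃ₗ[R] M) := by
  let : Module K M := Module.compHom M (algebraMap K R)
  have : IsScalarTower K R M := ⟨fun c r m => by
    change (c • r) • m = algebraMap K R c • r • m
    rw [Algebra.smul_def, mul_smul]⟩
  have : Module.Finite R M := hf
  have : Module.Finite K M := Module.Finite.trans R M
  have hex : ∃ n, ∃ U : QRep K D.E, Nonempty (G U ≃ₗ[R] M) ∧ tdim U = n := by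
    obtain ⟨U, hU⟩ := G_dense (D := D) (M := M)
    exact ⟨_, U, hU, rfl⟩
  obtain ⟨U, ⟨e⟩, hU⟩ := Nat.find_spec hex
  have hmin : ∀ U' : QRep K D.E, Nonempty (G U' ≃ₗ[R] M) → tdim U ≤ tdim U' := by
    intro U' h
    rw [hU]; exact Nat.find_min' hex ⟨U', h, rfl⟩
  have key : ∀ g : QHom U U, g.comp g = g → Gmap g = LinearMap.id → g = QHom.id U := by
    intro g hg h
    obtain ⟨U1, i, p, hip, hpi, hd⟩ := split_idem U g hg
    have e1 : G U1 ≃ₗ[R] G U := by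
      refine LinearEquiv.ofLinearMap (Gmap i) (Gmap p) ?_ ?_
      · rw [← Gmap_comp, hip, h]
      · rw [← Gmap_comp, hpi, Gmap_id]
    exact hd (hmin U1 ⟨e1.trans e⟩)
  refine ⟨U, ⟨?_, ?_⟩, ⟨e⟩⟩
  · intro hz
    have := G_zero (D := D) hz.2
    exact hM.1 (ModuleCat.isZero_iff_subsingleton.2 e.symm.injective.subsingleton)
  · intro g hg
    have hx (a : I) (u : U.X a) : g.x a (g.x a u) = g.x a u :=
      congrArg (fun k : QHom U U => k.x a u) hg
    have hy (a : I) (u : U.Y a) : g.y a (g.y a u) = g.y a u :=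
      congrArg (fun k : QHom U U => k.y a u) hg
    have hGG (x : G U) : Gmap g (Gmap g x) = Gmap g x := by
      rw [← LinearMap.comp_apply, ← Gmap_comp, hg]
    rcases indec_idem hM (e.toLinearMap.comp ((Gmap g).comp e.symm.toLinearMap))
      (fun x => by simp [hGG]) with h | h
    · left
      have h0 : Gmap g = 0 := by
        refine LinearMap.ext fun x => ?_
        have := h (e x)
        simpa using this
      let g' : QHom U U := ⟨fun a => LinearMap.id - g.x a, fun a => LinearMap.id - g.y a,
        fun a b hab u => by simp [g.comm]⟩
      have h1 : g' = QHom.id U := by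
        refine key g' (QHom.ext' (fun a u => ?_) fun a u => ?_) (G_ext fun a v => ?_)
        · change (u - g.x a u) - g.x a (u - g.x a u) = u - g.x a u
          rw [map_sub, hx]; simp
        · change (u - g.y a u) - g.y a (u - g.y a u) = u - g.y a u
          rw [map_sub, hy]; simp
        · rw [Gmap_eta]
          change gq U (eta D a (v - g.y a v)) = _
          rw [map_sub, map_sub, ← Gmap_eta, h0]; simp
      refine ⟨fun a u => ?_, fun a u => ?_⟩
      · have : u - g.x a u = u := congrArg (fun k : QHom U U => k.x a u) h1
        simpa using this
      · have : u - g.y a u = u := congrArg (fun k : QHom U U => k.y a u) h1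
        simpa using this
    · right
      refine key g hg (LinearMap.ext fun x => ?_)
      have := h (e x)
      simpa using this

theorem pre_zero_ge (E : I → I → Prop) (N : ℕ) (h0 : ∀ v, QIsZero (pre K N E v))
    (h1 : ∀ v, QIsZero (pre K (N + 1) E v)) : ∀ j v, QIsZero (pre K (N + j) E v) ∧
      QIsZero (pre K (N + j + 1) E v)
  | 0, v => ⟨h0 v, h1 v⟩
  | j + 1, v => ⟨(pre_zero_ge E N h0 h1 j v).2, by
      have := (pre_zero_ge E N h0 h1 j v).1
      exact pre_isZero_succ (E := E) (pre_isZero_succ (E := fl E) this)⟩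

theorem rep_finite_half (N : ℕ) (h0 : ∀ v, QIsZero (pre K N D.E v))
    (h1 : ∀ v, QIsZero (pre K (N + 1) D.E v)) : IsRepFiniteRing R := by
  let S := Fin N × I
  let eS := Fintype.equivFin S
  refine ⟨Fintype.card S, fun i => ModuleCat.of R (G (pre K ((eS.symm i).1 : ℕ) D.E (eS.symm i).2)),
    fun M hf hM => ?_⟩
  obtain ⟨U, hU, ⟨e⟩⟩ := indec_G (D := D) hf hM
  have hz {W : QRep K D.E} (hW : QIsZero W) (g : QHom W U) : g.IsZ :=
    ⟨fun a u => by rw [(hW.1 a).elim u 0, map_zero], fun a u => by rw [(hW.2 a).elim u 0, map_zero]⟩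
  obtain ⟨j, v, hj⟩ := fin_lemma N D.E U hU (fun v => hz (h0 v)) (fun v => hz (h1 v))
  obtain ⟨e'⟩ := G_iso hj
  have hjN : j < N := by
    by_contra h
    have h2 := (pre_zero_ge D.E N h0 h1 (j - N) v).1
    rw [Nat.add_sub_cancel' (by omega)] at h2
    have := G_zero (D := D) h2.2
    have := e'.injective.subsingleton
    exact hM.1 (ModuleCat.isZero_iff_subsingleton.2 e.symm.injective.subsingleton)
  refine ⟨eS (⟨j, hjN⟩, v), ?_⟩
  beta_reduce
  rw [Equiv.symm_apply_apply]
  exact ⟨(e.symm.trans e').toModuleIso⟩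

theorem hasCovers : HasCovers D.J := by
  intro M _ _ hf
  let : Module K M := Module.compHom M (algebraMap K R)
  have : IsScalarTower K R M := ⟨fun c r m => by
    change (c • r) • m = algebraMap K R c • r • m
    rw [Algebra.smul_def, mul_smul]⟩
  have : Module.Finite K M := Module.Finite.trans R M
  obtain ⟨V, _, _, _, q, hq, hk⟩ := exists_cover (D := D) (M := M)
  exact ⟨PP D V, inferInstance, inferInstance, q, inferInstance, inferInstance, hq, hk⟩

theorem G_scal {U : QRep K D.E} (g : QHom U U) (c : K) (h : ∀ a u, g.y a u = c • u) (x : G U) :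
    Gmap g x = algebraMap K R c • x := by
  have : Gmap g = scal c := by
    refine G_ext fun a v => ?_
    rw [Gmap_eta, h, scal_apply, LinearMap.map_smul, algebraMap_smul]
    exact LinearMap.map_smul_of_tower (gq U) c _
  rw [this, scal_apply]

theorem G_nontriv {U : QRep K D.E} (h : ¬ QIsZero U) (hi : U.Inj) : Nontrivial (G U) := by
  rw [← not_subsingleton_iff_nontrivial]
  intro hs
  have hy := fun a => G_sub hs a
  refine h ⟨fun a => ⟨fun x y => hi a ?_⟩, hy⟩
  funext b
  exact (hy b).elim _ _

theorem core (c : I → Bool) (hc : ∀ b a, D.E b a → c b ≠ c a) (ht : IsTauTiltingFiniteRing R) :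
    IsRepFiniteRing R := by
  by_cases hN : ∃ N, (∀ v, QIsZero (pre K N D.E v)) ∧ ∀ v, QIsZero (pre K (N + 1) D.E v)
  · obtain ⟨N, h0, h1⟩ := hN
    exact rep_finite_half N h0 h1
  exfalso
  have : IsArtinianRing R := IsArtinianRing.of_finite K R
  have : IsNoetherianRing R := inferInstance
  have hinf : ∀ N, ∃ k ≥ N, ∃ v, ¬ QIsZero (pre K (k + 2) D.E v) := by
    intro N
    by_contra hcon
    push Not at hcon
    exact hN ⟨N + 2, hcon N le_rfl, hcon (N + 1) (by omega)⟩
  obtain ⟨n, f, hf⟩ := ht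
  have hne {k v} (h : ¬ QIsZero (pre K (k + 2) D.E v)) : ¬ QIsZero (pre K k D.E v) := fun h' =>
    h (pre_isZero_succ (E := D.E) (pre_isZero_succ (E := fl D.E) h'))
  have hinj {k v} (h : ¬ QIsZero (pre K (k + 2) D.E v)) : (pre K k D.E v).Inj :=
    pre_inj k D.E v fun h' => h (pre_isZero_succ (E := D.E) h')
  let P (k : ℕ) (v : I) (i : Fin n) : Prop := ¬ QIsZero (pre K k D.E v) ∧
    (pre K k D.E v).Inj ∧ IsFGMod (f i) ∧ 
      ∃ (j : G (pre K k D.E v) →ₗ[R] f i) (p : f i →ₗ[R] G (pre K k D.E v)), ∀ x, p (j x) = x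
  have hP : ∀ N, ∃ k ≥ N, ∃ v i, P k v i := by
    intro N
    obtain ⟨k, hk, v, hv⟩ := hinf N
    have hs := pre_supp (K := K) c k D.E v hc
    obtain ⟨T, hT1, hT2, hT3, j, p, hjp⟩ := bongartz (K := K) D.JJ (hasCovers (D := D))
      (G_pres (pre K k D.E v)) (ff_ker _ (hinj hv))
      (G_homSurj _ (pre_rigid k D.E v) c _ hs) (G_nontriv (hne hv) (hinj hv)) (fun u => by
        obtain ⟨g, rfl⟩ := G_full _ _ c _ hs hs hc u
        obtain ⟨cc, hcc⟩ := pre_brick k D.E v (hne hv) g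
        exact ⟨cc, G_scal g cc hcc.2⟩)
    obtain ⟨i, ⟨e⟩⟩ := hf T hT1 hT2
    have hT3' : Module.Finite R T := hT3
    refine ⟨k, hk, v, i, hne hv, hinj hv, Module.Finite.equiv e.toLinearEquiv,
      e.toLinearEquiv.toLinearMap.comp j, p.comp e.toLinearEquiv.symm.toLinearMap, fun x => ?_⟩
    simp [hjp]
  obtain ⟨v, i, s, hS⟩ : ∃ v i, ∃ s : Bool, ∀ N, ∃ k ≥ N, decide (k % 2 = 0) = s ∧ P k v i := by
    by_contra hcon
    push Not at hcon
    choose B hB using hcon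
    let t : Finset (I × Fin n × Bool) := Finset.univ
    obtain ⟨k, hk, v, i, h⟩ := hP (t.sup fun x => B x.1 x.2.1 x.2.2)
    refine hB v i (decide (k % 2 = 0)) k (le_trans ?_ hk) rfl h
    exact Finset.le_sup (f := fun x : I × Fin n × Bool => B x.1 x.2.1 x.2.2)
      (Finset.mem_univ (v, i, decide (k % 2 = 0)))
  have hfin : Module.Finite R (f i) := by
    obtain ⟨k, _, _, h⟩ := hS 0
    exact h.2.2.1
  let S : Set ℕ := {k | decide (k % 2 = 0) = s ∧ P k v i}
  choose j p hjp using fun k : S => k.2.2.2.2.2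
  let A (m : ℕ) : Submodule R (f i) := ⨅ k : S, ⨅ _ : (k : ℕ) < m, LinearMap.ker (p k)
  have hA : ∀ m x, x ∈ A m ↔ ∀ k : S, (k : ℕ) < m → p k x = 0 := by
    intro m x
    simp [A, Submodule.mem_iInf]
  have hmono : ∀ m m', m ≤ m' → A m' ≤ A m := by
    intro m m' h x hx
    rw [hA] at hx ⊢
    exact fun k hk => hx k (by omega)
  obtain ⟨m, hm⟩ := IsArtinian.monotone_stabilizes
    (⟨fun m => OrderDual.toDual (A m), fun a b h => hmono a b h⟩ : ℕ →o (Submodule R (f i))ᵒᵈ)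
  obtain ⟨k, hkm, hk⟩ := hS m
  let k' : S := ⟨k, hk⟩
  have hnt := G_nontriv hk.2.1 hk.2.2.1
  obtain ⟨x, hx⟩ := exists_ne (0 : G (pre K k D.E v))
  have h1 : j k' x ∈ A k := by
    rw [hA]
    intro l hl
    have hsl := pre_supp (K := K) c l D.E v hc
    have hsk := pre_supp (K := K) c k D.E v hc
    rw [hk.1] at hsk
    rw [l.2.1] at hsl
    obtain ⟨g, hg⟩ := G_full _ _ c _ hsk hsl hc ((p l).comp (j k'))
    have hz := pre_hom_zero l D.E k v v hl l.2.2.1 g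
    have : (p l).comp (j k') = 0 := by rw [hg, Gmap_zero_y g hz.2]
    exact LinearMap.congr_fun this x
  have h2 : A k = A (k + 1) := by
    have h3 := hm k hkm
    have h4 := hm (k + 1) (by omega)
    exact OrderDual.toDual.injective (h3.symm.trans h4)
  rw [h2, hA] at h1
  have := h1 k' (Nat.lt_succ_self k)
  rw [hjp k'] at this
  exact hx this

end Core

section Alg
open Classical Polynomial
variable {Λ : Type} [Ring Λ]

theorem unit_swap {a b : Λ} (h : IsUnit (1 - a * b)) : IsUnit (1 - b * a) := by
  obtain ⟨u, hu⟩ := h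
  have h1 : (1 - a * b) * (↑u⁻¹ : Λ) = 1 := by rw [← hu]; exact u.mul_inv
  have h2 : (↑u⁻¹ : Λ) * (1 - a * b) = 1 := by rw [← hu]; exact u.inv_mul
  generalize (↑u⁻¹ : Λ) = w at h1 h2
  refine ⟨⟨1 - b * a, 1 + b * w * a, ?_, ?_⟩, rfl⟩
  · have : (1 - b * a) * (1 + b * w * a) = 1 - b * a + b * ((1 - a * b) * w) * a := by noncomm_ring
    rw [this, h1]; noncomm_ring
  · have : (1 + b * w * a) * (1 - b * a) = 1 - b * a + b * (w * (1 - a * b)) * a := by noncomm_ring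
    rw [this, h2]; noncomm_ring

theorem InRad.left {x : Λ} (h : InRad Λ x) (r : Λ) : InRad Λ (r * x) := fun y => by
  rw [← mul_assoc]; exact h _

theorem InRad.right {x : Λ} (h : InRad Λ x) (r : Λ) : InRad Λ (x * r) := fun y => by
  rw [← mul_assoc]
  apply unit_swap
  rw [← mul_assoc]; exact h _

theorem InRad.add {a b : Λ} (ha : InRad Λ a) (hb : InRad Λ b) : InRad Λ (a + b) := fun y => by
  obtain ⟨u, hu⟩ := ha y
  have h1 := hb ((↑u⁻¹ : Λ) * y)
  have h2 : 1 - y * (a + b) = (u : Λ) * (1 - (↑u⁻¹ : Λ) * y * b) := by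
    rw [mul_sub, mul_one, mul_assoc, Units.mul_inv_cancel_left, hu]; noncomm_ring
  rw [h2]
  exact u.isUnit.mul h1

theorem InRad.zero : InRad Λ (0 : Λ) := fun y => by simp

theorem radSq_iff (hrad : RadSqZero Λ) (x : Λ) : InRadSq Λ x ↔ x = 0 := by
  constructor
  · intro h
    refine AddSubgroup.closure_induction (p := fun x _ => x = 0) ?_ rfl ?_ ?_ h
    · rintro _ ⟨a, b, ha, hb, rfl⟩; exact hrad a b ha hb
    · rintro _ _ _ _ rfl rfl; simp
    · rintro _ _ rfl; simp
  · rintro rfl; exact AddSubgroup.zero_mem _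

theorem corner_dich (K : Type) [Field K] [Algebra K Λ] [FiniteDimensional K Λ]
    {e : Λ} (he : IsPrimitiveIdem Λ e) {y : Λ} (h1 : e * y = y) (h2 : y * e = y) :
    IsNilpotent y ∨ ∃ z, z * y = e := by
  have hint : IsIntegral K y := Algebra.IsIntegral.isIntegral y
  obtain ⟨q, hq, hnd⟩ := exists_eq_pow_rootMultiplicity_mul_and_not_dvd (minpoly K y)
    (minpoly.ne_zero hint) 0
  generalize (minpoly K y).rootMultiplicity 0 = k at hq
  rw [C_0, sub_zero] at hq hnd
  have hco : IsCoprime ((X : K[X]) ^ (k + 1)) q :=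
    ((prime_X.coprime_iff_not_dvd).2 hnd).pow_left
  obtain ⟨a, b, hab⟩ := hco
  have hk : (X : K[X]) ^ (k + 1) = a * (X ^ (k + 1) * X ^ (k + 1)) + X * b * minpoly K y := by
    calc (X : K[X]) ^ (k + 1) = X ^ (k + 1) * (a * X ^ (k + 1) + b * q) := by rw [hab, mul_one]
      _ = a * (X ^ (k + 1) * X ^ (k + 1)) + X * b * (X ^ k * q) := by ring
      _ = _ := by rw [← hq]
  have hk2 := congrArg (aeval y) hk
  simp only [map_add, map_mul, map_pow, aeval_X, minpoly.aeval, mul_zero, add_zero] at hk2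
  have hwy : Commute (aeval y a) y := by
    have : Commute (aeval y a) (aeval y (X : K[X])) := (Commute.all a X).map (aeval y)
    rwa [aeval_X] at this
  generalize aeval y a = w at hk2 hwy
  have hwn : w * y ^ (k + 1) = y ^ (k + 1) * w := hwy.pow_right _
  have hfi : IsIdempotentElem (w * y ^ (k + 1)) := by
    change w * y ^ (k + 1) * (w * y ^ (k + 1)) = w * y ^ (k + 1)
    calc w * y ^ (k + 1) * (w * y ^ (k + 1)) = w * (y ^ (k + 1) * w) * y ^ (k + 1) := by
          simp only [mul_assoc]
      _ = w * (w * (y ^ (k + 1) * y ^ (k + 1))) := by rw [← hwn]; simp only [mul_assoc]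
      _ = _ := by rw [← hk2]
  have hfe : w * y ^ (k + 1) * e = w * y ^ (k + 1) := by
    rw [pow_succ, mul_assoc, mul_assoc, h2]
  have hef : e * (w * y ^ (k + 1)) = w * y ^ (k + 1) := by
    rw [hwn, pow_succ', ← mul_assoc, ← mul_assoc, h1]
  have hee : e * e = e := he.1
  have hff : w * y ^ (k + 1) * (w * y ^ (k + 1)) = w * y ^ (k + 1) := hfi
  rcases he.2.2 (w * y ^ (k + 1)) (e - w * y ^ (k + 1)) hfi
    (by
      change (e - w * y ^ (k + 1)) * (e - w * y ^ (k + 1)) = _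
      rw [mul_sub, sub_mul, sub_mul, hee, hfe, hef, hff]; simp)
    (by rw [mul_sub, hfe, hff, sub_self]) (by rw [sub_mul, hef, hff, sub_self])
    (by simp) with h | h
  · left
    refine ⟨k + 1, ?_⟩
    rw [hk2, ← mul_assoc, h, zero_mul]
  · right
    refine ⟨w * y ^ k, ?_⟩
    rw [mul_assoc, ← pow_succ]
    exact (sub_eq_zero.1 h).symm

theorem corner_nil_rad (K : Type) [Field K] [Algebra K Λ] [FiniteDimensional K Λ]
    {e : Λ} (he : IsPrimitiveIdem Λ e) {y : Λ} (h1 : e * y = y) (h2 : y * e = y)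
    (hn : IsNilpotent y) : InRad Λ y := by
  intro r
  rw [← h2, ← mul_assoc]
  apply unit_swap
  rw [← mul_assoc]
  have hee : e * e = e := he.1
  rcases corner_dich K he (y := e * r * y) (by simp only [← mul_assoc, hee])
    (by rw [mul_assoc, h2]) with h | ⟨z, hz⟩
  · exact h.isUnit_one_sub
  · exfalso
    obtain ⟨m, hm⟩ := hn
    have key : ∀ m, e * y ^ m = 0 → e = 0 := by
      intro m
      induction m with
      | zero => intro h; simpa using h
      | succ m ih =>
        intro h
        apply ih
        have : e * y ^ m = (z * (e * r)) * (y * y ^ m) := by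
          have h3 := congrArg (· * y ^ m) hz
          simp only [mul_assoc] at h3 ⊢
          exact h3.symm
        rw [this, ← pow_succ']
        rw [pow_succ', ← mul_assoc, h1, ← pow_succ'] at h
        rw [h, mul_zero]
    exact he.2.1 (key m (by rw [hm, mul_zero]))

theorem corner_scalar (K : Type) [Field K] [IsAlgClosed K] [Algebra K Λ] [FiniteDimensional K Λ]
    {e : Λ} (he : IsPrimitiveIdem Λ e) (hd : ∀ x, InRad Λ x → e * x * e = 0) (r : Λ) :
    ∃ c : K, e * r * e = c • e := by
  have hee : e * e = e := he.1
  let V : Submodule K Λ := LinearMap.range (LinearMap.mulLeft K e)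
  let T : V →ₗ[K] V := ((LinearMap.mulLeft K (e * r)).comp V.subtype).codRestrict V (fun v => by
    refine ⟨r * v, ?_⟩
    simp [mul_assoc])
  have : Nontrivial V := ⟨⟨⟨e, e, hee⟩, 0, fun h => he.2.1 (congrArg Subtype.val h)⟩⟩
  obtain ⟨c, hc⟩ := Module.End.exists_eigenvalue T
  obtain ⟨v, hv⟩ := hc.exists_hasEigenvector
  have hv1 : e * r * (v : Λ) = c • (v : Λ) := congrArg Subtype.val hv.apply_eq_smul
  have hv0 : (v : Λ) ≠ 0 := fun h => hv.2 (Subtype.ext h)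
  have hev : e * (v : Λ) = v := by
    obtain ⟨w, hw⟩ := v.2
    rw [← hw]
    change e * (e * w) = e * w
    rw [← mul_assoc, hee]
  refine ⟨c, ?_⟩
  have h1 : e * (e * r * e - c • e) = e * r * e - c • e := by
    rw [mul_sub, ← mul_assoc, ← mul_assoc, hee, mul_smul_comm, hee]
  have h2 : (e * r * e - c • e) * e = e * r * e - c • e := by
    rw [sub_mul, mul_assoc, hee, smul_mul_assoc, hee]
  have hnil : IsNilpotent (e * r * e - c • e) := by
    rcases corner_dich K he h1 h2 with h | ⟨z, hz⟩
    · exact h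
    · exfalso
      apply hv0
      rw [← hev, ← hz, mul_assoc, sub_mul, mul_assoc, hev, hv1, smul_mul_assoc, hev, sub_self,
        mul_zero]
  have := hd _ (corner_nil_rad K he h1 h2 hnil)
  rw [h1, h2] at this
  exact sub_eq_zero.1 this

/-- the ideal generated by some of the idempotents contains one -/
def Gen {n : ℕ} (e : Fin n → Λ) (S : Finset (Fin n)) : Prop :=
  (1 : Λ) ∈ AddSubgroup.closure {x : Λ | ∃ i ∈ S, ∃ r s, x = r * e i * s}

theorem main_aux (K Λ : Type) [Field K] [IsAlgClosed K] [Ring Λ] [Algebra K Λ]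
    [FiniteDimensional K Λ]
    (htree : IsTreeQuiverAlgebra Λ K)
    (hrad : RadSqZero Λ)
    (ht : IsTauTiltingFinite Λ) :
    IsRepFinite Λ := by
  obtain ⟨n, e, ⟨hprim, horth, hsum⟩, hloop, -, hmult, htr⟩ := htree
  have hd (i : Fin n) (x : Λ) (hx : InRad Λ x) : e i * x * e i = 0 := by
    by_contra h
    exact hloop i ⟨x, hx, fun h' => h ((radSq_iff hrad _).1 h')⟩
  have hee (i : Fin n) : e i * e i = e i := (hprim i).1
  have hsc (i : Fin n) (r : Λ) : ∃ c : K, e i * r * e i = c • e i :=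
    corner_scalar K (hprim i) (hd i) r
  -- minimal generating set
  have hex : ∃ m, ∃ S : Finset (Fin n), Gen e S ∧ S.card = m := by
    refine ⟨_, Finset.univ, ?_, rfl⟩
    unfold Gen
    have h : (1 : Λ) = ∑ i, e i := hsum.symm
    rw [h]
    exact AddSubgroup.sum_mem _ fun i _ => AddSubgroup.subset_closure
      ⟨i, Finset.mem_univ i, 1, 1, by simp⟩
  obtain ⟨S, hS, hcard⟩ := Nat.find_spec hex
  have hmin : ∀ S', Gen e S' → S.card ≤ S'.card := by
    intro S' h
    rw [hcard]; exact Nat.find_min' hex ⟨S', h, rfl⟩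
  have hoff (i j : Fin n) (hi : i ∈ S) (hj : j ∈ S) (hij : i ≠ j) (x : Λ) :
      InRad Λ (e i * x * e j) := by
    intro r
    rw [← mul_assoc]
    apply unit_swap
    obtain ⟨c, hc⟩ := hsc j (r * e i * x)
    have h1 : e j * (r * (e i * x)) = e j * (r * e i * x) := by simp only [mul_assoc]
    by_cases hc0 : c = 0
    · apply unit_swap
      have h2 : r * (e i * x) * e j = r * (e i * x) * e j * e j := by
        rw [mul_assoc _ (e j) (e j), hee]
      rw [h2]
      apply unit_swap
      have h3 : e j * (r * (e i * x) * e j) = e j * (r * e i * x) * e j := by simp only [mul_assoc]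
      rw [h3, hc, hc0]; simp
    · exfalso
      have h2 : e j = (c⁻¹ • (e j * r)) * e i * (x * e j) := by
        have : (c⁻¹ • (e j * r)) * e i * (x * e j) = c⁻¹ • (e j * (r * e i * x) * e j) := by
          simp only [smul_mul_assoc, mul_assoc]
        rw [this, hc, smul_smul, inv_mul_cancel₀ hc0, one_smul]
      have hG : Gen e (S.erase j) := by
        refine (AddSubgroup.closure_le _).2 ?_ hS
        rintro _ ⟨k, hk, a, b, rfl⟩
        by_cases hkj : k = j
        · subst hkj
          refine AddSubgroup.subset_closure ⟨i, Finset.mem_erase.2 ⟨hij, hi⟩,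
            a * (c⁻¹ • (e k * r)), x * e k * b, ?_⟩
          conv_lhs => rw [h2]
          simp only [mul_assoc]
        · exact AddSubgroup.subset_closure ⟨k, Finset.mem_erase.2 ⟨hkj, hk⟩, a, b, rfl⟩
      have := hmin _ hG
      have h4 := Finset.card_erase_lt_of_mem hj
      omega
  have hal (i j : S) : ∃ α : Λ, e i * α * e j = α ∧ (i = j → α = e i) ∧ (i ≠ j → InRad Λ α) ∧
      ∀ r, ∃ c : K, e i * r * e j = c • α := by
    by_cases hij : i = j
    · subst hij
      exact ⟨e i, by rw [hee, hee], fun _ => rfl, fun h => absurd rfl h, hsc i⟩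
    have hij' : (i : Fin n) ≠ j := fun h => hij (Subtype.ext h)
    by_cases h0 : ∃ x, e i * x * e j ≠ 0
    · obtain ⟨x, hx⟩ := h0
      have hidem (r : Λ) : e i * (e i * r * e j) * e j = e i * r * e j := by
        rw [← mul_assoc, ← mul_assoc, hee, mul_assoc, hee]
      refine ⟨e i * x * e j, hidem x, fun h => absurd h hij, fun _ => hoff i j i.2 j.2 hij' x,
        fun r => ?_⟩
      obtain ⟨a, b, hab, h⟩ := hmult i j _ _ (hoff i j i.2 j.2 hij' x) (hoff i j i.2 j.2 hij' r)
      rw [radSq_iff hrad, hidem, hidem] at h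
      have hb : b ≠ 0 := by
        rintro rfl
        rw [zero_smul, add_zero, smul_eq_zero] at h
        rcases hab with h' | h'
        · exact hx (h.resolve_left h')
        · exact h' rfl
      refine ⟨-(b⁻¹ * a), ?_⟩
      have h2 := congrArg (fun z => b⁻¹ • z) h
      simp only [smul_add, smul_smul, inv_mul_cancel₀ hb, one_smul, smul_zero] at h2
      rw [neg_smul]
      exact eq_neg_of_add_eq_zero_right h2
    · push Not at h0
      exact ⟨0, by simp, fun h => absurd h hij, fun _ => InRad.zero, fun r => ⟨0, by simp [h0]⟩⟩
  choose α hα1 hα2 hα3 hα4 using hal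
  have hαr (a b : S) : α a b * e b = α a b := by
    rw [← hα1 a b, mul_assoc _ (e b) (e b), hee]
  have hαl (a b : S) : e a * α a b = α a b := by
    rw [← hα1 a b, ← mul_assoc, ← mul_assoc, hee]
  let D : Dat K Λᵐᵒᵖ S :=
    { e := fun i => MulOpposite.op (e i)
      α := fun b a => MulOpposite.op (α a b)
      J :=
        { carrier := {x | InRad Λ x.unop}
          add_mem' := fun ha hb => InRad.add ha hb
          zero_mem' := InRad.zero
          smul_mem' := fun r x hx => InRad.right (x := x.unop) hx r.unop }
      adiag := fun a => congrArg MulOpposite.op (hα2 a a rfl)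
      idem := fun a => congrArg MulOpposite.op (hee a)
      orth := fun a b h => congrArg MulOpposite.op (horth b a fun h' => h (Subtype.ext h'.symm))
      ne := fun a h => (hprim a).2.1 (MulOpposite.op_injective h)
      al := fun b a => congrArg MulOpposite.op (hαr a b)
      ar := fun b a => congrArg MulOpposite.op (hαl a b)
      sp := fun b a r => by
        obtain ⟨c, hc⟩ := hα4 a b r.unop
        refine ⟨c, MulOpposite.unop_injective ?_⟩
        change e a * (r.unop * e b) = c • α a b
        rw [← hc, mul_assoc]
      JJ := fun x hx r y hy => MulOpposite.unop_injective
        (hrad y.unop (r.unop * x.unop) hy (InRad.left hx _))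
      aJ := fun b a h => hα3 a b h.symm
      Jdiag := fun a x hx => MulOpposite.unop_injective (by
        change e a * (x.unop * e a) = 0
        rw [← mul_assoc]; exact hd a _ hx)
      Jr := fun x hx r => InRad.left (x := x.unop) hx r.unop
      full := by
        have : AddSubgroup.closure {x : Λ | ∃ i ∈ S, ∃ r s, x = r * e i * s} ≤
          (AddSubgroup.closure {x : Λᵐᵒᵖ | ∃ (i : S) (r s : Λᵐᵒᵖ), x = r * MulOpposite.op (e i) * s}).comap
            (MulOpposite.opAddEquiv : Λ ≃+ Λᵐᵒᵖ).toAddMonoidHom := by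
          refine (AddSubgroup.closure_le _).2 ?_
          rintro _ ⟨i, hi, r, s, rfl⟩
          refine AddSubgroup.subset_closure ⟨⟨i, hi⟩, MulOpposite.op s, MulOpposite.op r, ?_⟩
          exact congrArg MulOpposite.op (mul_assoc r (e i) s)
        exact this hS }
  obtain ⟨col⟩ := htr.colorable_two
  refine core (D := D) (fun i => decide (col i = 0)) ?_ ht
  intro b a hE
  have h0 : α a b ≠ 0 := fun h => hE.2 (congrArg MulOpposite.op h)
  have hab : a ≠ b := hE.1.symm
  have harr : HasArrow Λ e a b := ⟨α a b, hα3 a b hab, by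
    rw [radSq_iff hrad, hα1]; exact h0⟩
  have hadj : (QuiverGraph Λ e).Adj (a : Fin n) b := by
    unfold QuiverGraph
    rw [SimpleGraph.fromRel_adj]
    exact ⟨fun h => hab (Subtype.ext h), Or.inl harr⟩
  have hcol := col.valid hadj
  intro h
  apply hcol
  have h' : (col (b : Fin n) = 0) ↔ (col (a : Fin n) = 0) := decide_eq_decide.1 h
  generalize col (a : Fin n) = x at h' ⊢
  generalize col (b : Fin n) = y at h' ⊢
  revert h'; revert x y; decide
end Alg

/-- Theorem 4.8(1) of the paper.  Let `Λ` be a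
finite-dimensional algebra over an algebraically closed field presented by a
quiver whose underlying graph is a tree, with radical square zero.  If `Λ` is
τ-tilting-finite, then `Λ` is representation-finite. -/
theorem tau_tilting_finite_tree_radical_square_zero_is_rep_finite
    (K Λ : Type) [Field K] [IsAlgClosed K] [Ring Λ] [Algebra K Λ] [FiniteDimensional K Λ]
    (htree : IsTreeQuiverAlgebra Λ K)
    (hrad : RadSqZero Λ)
    (ht : IsTauTiltingFinite Λ) :
    IsRepFinite Λ := by
  exact main_aux K Λ htree hrad ht

end PaperSilting
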